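/- arXiv:1507.07601 — 3 statements merged into one kernel-verified Lean document; each statement's English description precedes it below -/
import Mathlib

section
/- Let n ≥ 2, let A be a connected topological space containing at least two points, and let μ : A → S^{n−1} ⊂ ℝⁿ be a continuous map with span{μ(a) : a ∈ A} = ℝⁿ. Then the subgroup of O(n) generated by the reflections {I − 2 μ(a)⊗μ(a) : a ∈ A} is equal to the whole orthogonal group O(n). -/
/-!
Let `G` be the group generated by the reflections in the vectors `μ a`. By the Cartan–Dieudonné theorem
(`mem_of_all_refl`) it suffices that `G` contains every reflection. The set `RS G` of unit vectors whose
reflection is in `G` contains the orbit of the curve `μ` under `G` and is stable under the reflections in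
its own members. The difficulty is that `G` is not assumed closed, and that `μ` is only continuous, so
that no differential argument is available.

*From a circle to the sphere.* A reflection-closed set of unit vectors that contains the unit sphere of a
subspace `V` of dimension at least two and a connected spanning set contains the unit sphere of a strictly
larger subspace (`step_one`). So it is enough that `RS G` contains one great circle. For `n = 2` this is
the intermediate value theorem (`all_of_two`).

*Density and intermediate values.* The same principle applied to the closure of the orbit shows that the
orbit is dense in the sphere (`Orb_dense`). Moreover every even continuous function has the intermediate
value property on the orbit (`Orb_ivt`), because consecutive translates of the curve meet up to sign.
Together these give, for `n ≥ 3`, reflections in `G` making any prescribed angle with any given plane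
(`GM_Dns`), and a vector of the orbit at angle `π / 4` from `μ a`.

*Filling a circle.* Fix a plane, and let `H` be the additive group of half-angles of the rotations in
this plane that lie in `G`. Conjugating such rotations by a reflection at an adjustable angle to the plane
gives rotations of a three-dimensional space about an axis with adjustable tilt. Choosing the tilt so that
a word in unit quaternions becomes a rotation in the original plane shows that `H` contains the
solution `w` of `sin A * sin B = sin C * sin w` for `A, B, C ∈ H`, under an open condition (`FO_HG`).
A chain of five such proportions leads from `φ` to an explicit angle `aH φ`, for all `φ` near a base angle
`phi0` (`chain`). If `π / 4 ∈ H`, then for each such `φ` there is an auxiliary plane, perpendicular to the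
given one, whose half-angle group contains `φ`, hence `aH φ`; a further word in these rotations is a
rotation in the given plane whose half-angle depends continuously and nontrivially on `φ`
(`closing_step`). Hence `H` contains an interval and is all of `ℝ` (`HG_eq_top`).
-/

open Matrix

/-- The reflection matrix `I − 2u⊗u`. -/
noncomputable def reflMat {n : ℕ} (u : Fin n → ℝ) : Matrix (Fin n) (Fin n) ℝ :=
  1 - (2 : ℝ) • vecMulVec u u

/-! ### Rotations and quaternions -/

namespace ReflGen

open Quaternion

variable {n : ℕ}

/-- `u, v` is an orthonormal pair. -/
def Ortho (u v : Fin n → ℝ) : Prop := u ⬝ᵥ u = 1 ∧ v ⬝ᵥ v = 1 ∧ u ⬝ᵥ v = 0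

/-- The rotation by the angle `2 * h` in the oriented plane of the orthonormal pair `u, v`, fixing the
orthogonal complement of the plane. The parameter is the half-angle, as for unit quaternions. -/
noncomputable def rot (u v : Fin n → ℝ) (h : ℝ) : Matrix (Fin n) (Fin n) ℝ :=
  1 - (2 * Real.sin h ^ 2) • (vecMulVec u u + vecMulVec v v)
    + (2 * Real.sin h * Real.cos h) • (vecMulVec v u - vecMulVec u v)

/-- The quaternion `w + x i + y j + z k`. -/
def qt (w x y z : ℝ) : ℍ[ℝ] := ⟨w, x, y, z⟩

@[simp] theorem qt_re (w x y z : ℝ) : (qt w x y z).re = w := rfl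
@[simp] theorem qt_imI (w x y z : ℝ) : (qt w x y z).imI = x := rfl
@[simp] theorem qt_imJ (w x y z : ℝ) : (qt w x y z).imJ = y := rfl
@[simp] theorem qt_imK (w x y z : ℝ) : (qt w x y z).imK = z := rfl

/-- The matrix of `x ↦ q x q̄` on the imaginary quaternions, in the basis `i, j, k`. -/
def conjMat (q : ℍ[ℝ]) : Matrix (Fin 3) (Fin 3) ℝ :=
  !![q.re^2 + q.imI^2 - q.imJ^2 - q.imK^2, 2 * (q.imI * q.imJ - q.re * q.imK),
       2 * (q.imI * q.imK + q.re * q.imJ);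
     2 * (q.imI * q.imJ + q.re * q.imK), q.re^2 - q.imI^2 + q.imJ^2 - q.imK^2,
       2 * (q.imJ * q.imK - q.re * q.imI);
     2 * (q.imI * q.imK - q.re * q.imJ), 2 * (q.imJ * q.imK + q.re * q.imI),
       q.re^2 - q.imI^2 - q.imJ^2 + q.imK^2]

theorem conjMat_mul (p q : ℍ[ℝ]) : conjMat (p * q) = conjMat p * conjMat q := by
  ext i j
  fin_cases i <;> fin_cases j <;>
    simp [conjMat, Matrix.mul_apply, Fin.sum_univ_three] <;> ring

theorem conjMat_neg (q : ℍ[ℝ]) : conjMat (-q) = conjMat q := by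
  ext i j
  fin_cases i <;> fin_cases j <;> simp [conjMat]

/-- For `U` with orthonormal columns: the map acting as `X` on the column space of `U`, in the basis of
its columns, and as the identity on the orthogonal complement. -/
def lift (U : Matrix (Fin n) (Fin 3) ℝ) (X : Matrix (Fin 3) (Fin 3) ℝ) :
    Matrix (Fin n) (Fin n) ℝ := 1 + U * (X - 1) * Uᵀ

theorem lift_mul {U : Matrix (Fin n) (Fin 3) ℝ} (hU : Uᵀ * U = 1)
    (X Y : Matrix (Fin 3) (Fin 3) ℝ) : lift U (X * Y) = lift U X * lift U Y := by
  have h : U * (X - 1) * Uᵀ * (U * (Y - 1) * Uᵀ) = U * ((X - 1) * (Y - 1)) * Uᵀ := by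
    calc _ = U * (X - 1) * (Uᵀ * U) * (Y - 1) * Uᵀ := by simp only [Matrix.mul_assoc]
      _ = _ := by rw [hU, Matrix.mul_one]; simp only [Matrix.mul_assoc]
  unfold lift
  rw [Matrix.add_mul, Matrix.mul_add, Matrix.mul_add, h]
  simp only [Matrix.one_mul, Matrix.mul_one]
  have : X * Y - 1 = (Y - 1) + ((X - 1) + (X - 1) * (Y - 1)) := by noncomm_ring
  rw [this]
  simp only [Matrix.mul_add, Matrix.add_mul]
  abel

/-- The matrix with columns `a, b, c`. -/
def frame (a b c : Fin n → ℝ) : Matrix (Fin n) (Fin 3) ℝ := Matrix.of fun i => ![a i, b i, c i]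

/-- `a, b, c` is an orthonormal triple. -/
structure Ortho3 (a b c : Fin n → ℝ) : Prop where
  aa : a ⬝ᵥ a = 1
  bb : b ⬝ᵥ b = 1
  cc : c ⬝ᵥ c = 1
  ab : a ⬝ᵥ b = 0
  ac : a ⬝ᵥ c = 0
  bc : b ⬝ᵥ c = 0

theorem frame_orth {a b c : Fin n → ℝ} (h : Ortho3 a b c) :
    (frame a b c)ᵀ * frame a b c = 1 := by
  have e : ∀ x y : Fin n → ℝ, ∑ k, x k * y k = x ⬝ᵥ y := fun x y => rfl
  ext i j
  fin_cases i <;> fin_cases j <;>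
    simp [frame, Matrix.mul_apply, e, h.aa, h.bb, h.cc, h.ab, h.ac, h.bc, dotProduct_comm b a,
      dotProduct_comm c a, dotProduct_comm c b]

theorem lift_k {a b c : Fin n → ℝ} (h : ℝ) :
    lift (frame a b c) (conjMat (qt (Real.cos h) 0 0 (Real.sin h))) = rot a b h := by
  have hs := Real.cos_sq' h
  ext i j
  simp [lift, frame, conjMat, rot, Matrix.mul_apply, Fin.sum_univ_three, vecMulVec_apply, hs]
  ring

theorem lift_j {a b c : Fin n → ℝ} (h : ℝ) :
    lift (frame a b c) (conjMat (qt (Real.cos h) 0 (Real.sin h) 0)) = rot c a h := by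
  have hs := Real.cos_sq' h
  ext i j
  simp [lift, frame, conjMat, rot, Matrix.mul_apply, Fin.sum_univ_three, vecMulVec_apply, hs]
  ring

theorem lift_refl {a b c : Fin n → ℝ} {x z : ℝ} (h : x ^ 2 + z ^ 2 = 1) :
    lift (frame a b c) (-conjMat (qt 0 x 0 z)) = reflMat (x • a + z • c) := by
  have hx : x ^ 2 = 1 - z ^ 2 := by linarith
  ext i j
  simp [lift, frame, conjMat, reflMat, Matrix.mul_apply, Fin.sum_univ_three, vecMulVec_apply, hx]
  linear_combination (2 * a i * a j) * hx
end ReflGen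

/-! ### The half-angles of the rotations in a group -/

namespace ReflGen
open Quaternion
variable {n : ℕ}

theorem vmv_mul (a b c d : Fin n → ℝ) :
    vecMulVec a b * vecMulVec c d = (b ⬝ᵥ c) • vecMulVec a d := by
  rw [vecMulVec_mul_vecMulVec]
  ext i j; simp [vecMulVec_apply]; ring

theorem rot_add {u v : Fin n → ℝ} (h : Ortho u v) (a b : ℝ) :
    rot u v (a + b) = rot u v a * rot u v b := by
  obtain ⟨h1, h2, h3⟩ := h
  have h4 : v ⬝ᵥ u = 0 := by rw [dotProduct_comm]; exact h3
  unfold rot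
  simp only [Matrix.add_mul, Matrix.sub_mul, Matrix.mul_add, Matrix.mul_sub, Matrix.one_mul, Matrix.mul_one,
    smul_mul_assoc, mul_smul_comm, vmv_mul, h1, h2, h3, h4, smul_add, smul_sub]
  ext i j
  simp only [Matrix.add_apply, Matrix.sub_apply, Matrix.smul_apply, smul_eq_mul, vecMulVec_apply, Real.sin_add, Real.cos_add]
  have e1 := Real.cos_sq' a
  have e2 := Real.cos_sq' b
  generalize Real.sin a = sa at *
  generalize Real.cos a = ca at *
  generalize Real.sin b = sb at *
  generalize Real.cos b = cb at *
  linear_combination (2 * sb * cb * (v i * u j - u i * v j) - 2 * sb^2 * (u i * u j + v i * v j)) * e1 + (2 * sa * ca * (v i * u j - u i * v j)- 2 * sa^2 * (u i * u j + v i * v j)) * e2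

theorem rot_zero (u v : Fin n → ℝ) : rot u v 0 = 1 := by simp [rot]

theorem rot_pi (u v : Fin n → ℝ) : rot u v Real.pi = 1 := by simp [rot]

theorem rot_neg (u v : Fin n → ℝ) (h : ℝ) : rot u v (-h) = (rot u v h)ᵀ := by
  ext i j
  have e : (1 : Matrix (Fin n) (Fin n) ℝ) i j = (1 : Matrix (Fin n) (Fin n) ℝ) j i := by
    simp [Matrix.one_apply, eq_comm]
  simp [rot, vecMulVec_apply, e]; ring

/-- The half-angles of the rotations in the plane of `u, v` that belong to `G`. -/
def HG (G : Submonoid (Matrix (Fin n) (Fin n) ℝ)) (hT : ∀ g ∈ G, gᵀ ∈ G)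
    {u v : Fin n → ℝ} (huv : Ortho u v) : AddSubgroup ℝ where
  carrier := {h | rot u v h ∈ G}
  zero_mem' := by simp [rot_zero, G.one_mem]
  add_mem' := by
    intro a b ha hb
    simp only [Set.mem_ofPred_eq, rot_add huv] at *
    exact G.mul_mem ha hb
  neg_mem' := by
    intro a ha
    simp only [Set.mem_ofPred_eq, rot_neg] at *
    exact hT _ ha

/-- Every plane makes every angle strictly between `0` and `π / 2` with some vector whose reflection
lies in `G`; `s` is the squared length of the projection of that vector to the plane. -/
def Dns (G : Submonoid (Matrix (Fin n) (Fin n) ℝ)) : Prop :=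
  ∀ u v : Fin n → ℝ, Ortho u v → ∀ s : ℝ, 0 < s → s < 1 →
    ∃ y, y ⬝ᵥ y = 1 ∧ reflMat y ∈ G ∧ (u ⬝ᵥ y) ^ 2 + (v ⬝ᵥ y) ^ 2 = s

/-- The quaternions that act on the span of the triple `a, b, c` as elements of `G`, where `a, b, c`
play the roles of `i, j, k`. -/
def Gam (G : Submonoid (Matrix (Fin n) (Fin n) ℝ)) (a b c : Fin n → ℝ) : Set ℍ[ℝ] :=
  {q | lift (frame a b c) (conjMat q) ∈ G}

theorem Gam_mul {G : Submonoid (Matrix (Fin n) (Fin n) ℝ)} {a b c : Fin n → ℝ}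
    (h : Ortho3 a b c) {p q : ℍ[ℝ]} (hp : p ∈ Gam G a b c) (hq : q ∈ Gam G a b c) :
    p * q ∈ Gam G a b c := by
  simp only [Gam, Set.mem_ofPred_eq, conjMat_mul, lift_mul (frame_orth h)] at *
  exact G.mul_mem hp hq

theorem Gam_neg {G : Submonoid (Matrix (Fin n) (Fin n) ℝ)} {a b c : Fin n → ℝ}
    {p : ℍ[ℝ]} (hp : p ∈ Gam G a b c) : -p ∈ Gam G a b c := by
  simpa only [Gam, Set.mem_ofPred_eq, conjMat_neg] using hp

/-- Conjugation by the reflection in `x • a + z • c`. On three-dimensional space that reflection is minus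
the conjugation by the imaginary quaternion `x i + z k`, and the two signs cancel. -/
theorem Gam_conj {G : Submonoid (Matrix (Fin n) (Fin n) ℝ)} {a b c : Fin n → ℝ}
    (h : Ortho3 a b c) {x z : ℝ} (hxz : x ^ 2 + z ^ 2 = 1) (hy : reflMat (x • a + z • c) ∈ G)
    {q : ℍ[ℝ]} (hq : q ∈ Gam G a b c) :
    (qt 0 x 0 z * q * qt 0 x 0 z) ∈ Gam G a b c := by
  have e : conjMat (qt 0 x 0 z * q * qt 0 x 0 z) =
      (-conjMat (qt 0 x 0 z)) * conjMat q * (-conjMat (qt 0 x 0 z)) := by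
    rw [conjMat_mul, conjMat_mul]; simp
  simp only [Gam, Set.mem_ofPred_eq, e, lift_mul (frame_orth h)] at *
  rw [lift_refl hxz]
  exact G.mul_mem (G.mul_mem hy hq) hy

/-- A frame `a, b, c` adapted to a vector `y`: `a, b` is an oriented orthonormal basis of the plane of
`u, v`, and `y` lies in the plane of `a, c`. -/
theorem exists_frame {u v y : Fin n → ℝ} (huv : Ortho u v) (hy : y ⬝ᵥ y = 1) {s : ℝ}
    (hs0 : 0 < s) (hs1 : s < 1) (hs : (u ⬝ᵥ y) ^ 2 + (v ⬝ᵥ y) ^ 2 = s) :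
    ∃ a b c : Fin n → ℝ, Ortho3 a b c ∧ (∀ h, rot a b h = rot u v h) ∧
      y = √s • a + √(1 - s) • c := by
  obtain ⟨h1, h2, h3⟩ := huv
  have h4 : v ⬝ᵥ u = 0 := by rw [dotProduct_comm]; exact h3
  set p := u ⬝ᵥ y with hp
  set q := v ⬝ᵥ y with hq
  have hp' : y ⬝ᵥ u = p := dotProduct_comm _ _
  have hq' : y ⬝ᵥ v = q := dotProduct_comm _ _
  set r := √s with hr
  set t := √(1 - s) with ht
  have hr0 : r ≠ 0 := (Real.sqrt_pos.2 hs0).ne'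
  have ht0 : t ≠ 0 := (Real.sqrt_pos.2 (by linarith)).ne'
  have hr2 : r ^ 2 = s := Real.sq_sqrt hs0.le
  have ht2 : t ^ 2 = 1 - s := Real.sq_sqrt (by linarith)
  refine ⟨(p / r) • u + (q / r) • v, (-(q / r)) • u + (p / r) • v,
    (1 / t) • (y - p • u - q • v), ?_, ?_, ?_⟩
  · constructor <;> simp only [dotProduct_add, add_dotProduct, smul_dotProduct, dotProduct_smul,
      dotProduct_sub, sub_dotProduct, smul_eq_mul, h1, h2, h3, h4, hp', hq', hy, ← hp, ← hq] <;> field_simp <;> nlinarith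
  · intro h
    ext i j
    have : p ^ 2 + q ^ 2 = r ^ 2 := by rw [hs, hr2]
    simp only [rot, Matrix.add_apply, Matrix.sub_apply, Matrix.smul_apply, smul_eq_mul, vecMulVec_apply, Pi.add_apply, Pi.smul_apply]
    have e : (p / r) ^ 2 + (q / r) ^ 2 = 1 := by field_simp; exact this
    generalize p / r = P at *
    generalize q / r = Q at *
    linear_combination (-(2 * Real.sin h ^ 2) * (u i * u j + v i * v j) + (2 * Real.sin h * Real.cos h) * (v i * u j - u i * v j)) * e
  · ext i
    simp only [Pi.add_apply, Pi.smul_apply, smul_eq_mul, Pi.sub_apply]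
    field_simp
    ring

end ReflGen

/-! ### The fourth-proportional operation -/

namespace ReflGen
open Quaternion
variable {n : ℕ}

/-- A subgroup `H` of half-angles satisfies `FO` if it contains `π` and every solution `w` of
`sin A * sin B = sin C * sin w` with `A, B, C ∈ H`, under an open condition on `A, B, C, w`. In effect
`H` is closed under a fourth-proportional operation on sines. -/
structure FO (H : AddSubgroup ℝ) : Prop where
  pi_mem : Real.pi ∈ H
  op : ∀ A B C w : ℝ, A ∈ H → B ∈ H → C ∈ H → Real.sin A * Real.sin B = Real.sin C * Real.sin w →
    Real.sin C ≠ 0 →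
    |2 * Real.cos (C - A) * Real.sin B * Real.cos B - Real.sin (w + B)|
      < 2 * |Real.sin (C - A)| * Real.sin B ^ 2 → w ∈ H

theorem Gam_of_mem {G : Submonoid (Matrix (Fin n) (Fin n) ℝ)} (hT : ∀ g ∈ G, gᵀ ∈ G)
    {u v : Fin n → ℝ} (huv : Ortho u v) {a b c : Fin n → ℝ}
    (hr : ∀ h, rot a b h = rot u v h) (h : ℝ) :
    qt (Real.cos h) 0 0 (Real.sin h) ∈ Gam G a b c ↔ h ∈ HG G hT huv := by
  change lift _ _ ∈ G ↔ rot u v h ∈ G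
  rw [lift_k, hr]

theorem qt_eq_of_sin {s h : ℝ} (hs : s ^ 2 + Real.sin h ^ 2 = 1) :
    s = Real.cos h ∨ s = Real.cos (Real.pi - h) := by
  have : s ^ 2 = Real.cos h ^ 2 := by rw [Real.cos_sq']; linarith
  rw [Real.cos_pi_sub]
  exact sq_eq_sq_iff_eq_or_eq_neg.1 this

/-- A rotation about the third axis is determined up to `h ↦ π - h` by the sine `sin h`, and `π` lies in
`HG`, so the real part of the quaternion need not be known exactly. -/
theorem mem_of_Gam {G : Submonoid (Matrix (Fin n) (Fin n) ℝ)} (hT : ∀ g ∈ G, gᵀ ∈ G)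
    {u v : Fin n → ℝ} (huv : Ortho u v) {a b c : Fin n → ℝ}
    (hr : ∀ h, rot a b h = rot u v h) {s h : ℝ} (hs : s ^ 2 + Real.sin h ^ 2 = 1)
    (hq : qt s 0 0 (Real.sin h) ∈ Gam G a b c) : h ∈ HG G hT huv := by
  have hpi : Real.pi ∈ HG G hT huv := by
    change rot u v _ ∈ G
    rw [rot_pi]; exact G.one_mem
  rcases qt_eq_of_sin hs with e | e
  · rw [e] at hq
    exact (Gam_of_mem hT huv hr h).1 hq
  · rw [e, ← Real.sin_pi_sub] at hq
    have := (Gam_of_mem hT huv hr _).1 hq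
    have h2 := (HG G hT huv).sub_mem hpi this
    simpa using h2

/-- The product `k(B) b(X) k(B)`, where `k(h) = cos h + sin h * k`, `b(h) = cos h + sin h * (e i + d k)`,
`c + s k = k(B)` and `x, y = cos X, sin X`. -/
theorem kbk (c s x y d e : ℝ) (hcs : c ^ 2 + s ^ 2 = 1) :
    qt c 0 0 s * qt x (y * e) 0 (y * d) * qt c 0 0 s =
      qt (x * (c ^ 2 - s ^ 2) - d * (2 * s * c) * y) (y * e) 0
        (y * d + (x * (2 * s * c) - 2 * d * s ^ 2 * y)) := by
  ext <;> simp
  · ring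
  · linear_combination y * e * hcs
  · ring
  · linear_combination y * d * hcs

/-- The product of a general quaternion in the span of `1, i, k` with `b(C)` on both sides, for
`c, s = cos C, sin C`. -/
theorem bkb (c s x p q d e : ℝ) (hcs : c ^ 2 + s ^ 2 = 1) (hde : d ^ 2 + e ^ 2 = 1) :
    qt c (s * e) 0 (s * d) * qt x (p * e) 0 (p * d + q) * qt c (s * e) 0 (s * d) =
      qt (x * (c ^ 2 - s ^ 2) - p * (2 * s * c) - q * d * (2 * s * c))
        ((x * (2 * s * c) + p * (c ^ 2 - s ^ 2) - 2 * d * s ^ 2 * q) * e) 0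
        ((x * (2 * s * c) + p * (c ^ 2 - s ^ 2) - 2 * d * s ^ 2 * q) * d + q) := by
  have he : e ^ 2 = 1 - d ^ 2 := by linarith
  have hc : c ^ 2 = 1 - s ^ 2 := by linarith
  ext <;> simp
  · linear_combination (-x * s ^2 - 2 * c * s * p) * he
  · linear_combination (-p * s ^2 * e) * he
  · ring
  · linear_combination (q * hc) + (-p * s^2 * d + q * s^2) * he

/-- The half-angles in a plane satisfy `FO`. With `k(h)` the rotation in the plane, and `b(h)` its
conjugate by a reflection in `G` (a rotation about an axis at angle `arccos d` from the original axis),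
consider the word `b(C) k(B) b(C - A) k(B) b(C)`. The inequality in `FO` says that there is `d` in
`(-1, 1)` for which its third component is `sin (w + B)`, and the sine identity says that its component
along the tilted axis vanishes for this `d`. Hence the word equals `k(w + B)`. -/
theorem FO_HG {G : Submonoid (Matrix (Fin n) (Fin n) ℝ)} (hT : ∀ g ∈ G, gᵀ ∈ G) (hD : Dns G)
    {u v : Fin n → ℝ} (huv : Ortho u v) : FO (HG G hT huv) := by
  refine ⟨?_, ?_⟩
  · change rot u v _ ∈ G
    rw [rot_pi]; exact G.one_mem
  intro A B C w hA hB hC hAB hC0 hd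
  have hX : C - A ∈ HG G hT huv := (HG G hT huv).sub_mem hC hA
  have hSA : Real.sin A = Real.sin C * Real.cos (C - A) - Real.cos C * Real.sin (C - A) := by
    rw [← Real.sin_sub]; ring_nf
  set Q := Real.sin (w + B) with hQ
  have hQ' := Real.sin_add w B
  rw [← hQ] at hQ'
  have hden : 0 < 2 * |Real.sin (C - A)| * Real.sin B ^ 2 := lt_of_le_of_lt (abs_nonneg _) hd
  have hden' : 2 * |Real.sin (C - A)| * Real.sin B ^ 2 = |2 * Real.sin (C - A) * Real.sin B ^ 2| := by
    rw [abs_mul, abs_mul, abs_of_nonneg (sq_nonneg (Real.sin B)), abs_two]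
  rw [hden'] at hd hden
  have hden0 := abs_pos.1 hden
  have hB0 : Real.sin B ≠ 0 := by
    intro h; apply hden0; rw [h]; ring
  have hX0 : Real.sin (C - A) ≠ 0 := by
    intro h; apply hden0; rw [h]; ring
  -- the cosine of the angle between the two rotation axes
  set d := (2 * Real.cos (C - A) * Real.sin B * Real.cos B - Q) / (2 * Real.sin (C - A) * Real.sin B ^ 2) with hdd
  have hdm : d * (2 * Real.sin (C - A) * Real.sin B ^ 2) = 2 * Real.cos (C - A) * Real.sin B * Real.cos B - Q :=
    div_mul_cancel₀ _ hden0
  have hd1 : |d| < 1 := by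
    rw [hdd, abs_div, div_lt_one hden]; exact hd
  have hd2 := abs_lt.1 hd1
  obtain ⟨y, hy, hyG, hys⟩ := hD u v huv ((1 - d) / 2) (by linarith) (by linarith)
  obtain ⟨a, b, c, hO, hr, hya⟩ := exists_frame huv hy (by linarith) (by linarith) hys
  set x := √((1 - d) / 2) with hx
  set z := √(1 - (1 - d) / 2) with hz
  have hx2 : x ^ 2 = (1 - d) / 2 := Real.sq_sqrt (by linarith)
  have hz2 : z ^ 2 = 1 - (1 - d) / 2 := Real.sq_sqrt (by linarith)
  have hxz : x ^ 2 + z ^ 2 = 1 := by rw [hx2, hz2]; ring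
  rw [hya] at hyG
  set e := 2 * z * x with he
  have hde : d ^ 2 + e ^ 2 = 1 := by
    have : e ^ 2 = 4 * z ^ 2 * x ^ 2 := by rw [he]; ring
    rw [this, hx2, hz2]; ring
  have hK : ∀ h ∈ HG G hT huv, qt (Real.cos h) 0 0 (Real.sin h) ∈ Gam G a b c :=
    fun h hh => (Gam_of_mem hT huv hr h).2 hh
  have hBB : ∀ h ∈ HG G hT huv, qt (Real.cos h) (Real.sin h * e) 0 (Real.sin h * d) ∈ Gam G a b c := by
    intro h hh
    have := Gam_neg (Gam_conj hO hxz hyG (hK h hh))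
    convert this using 1
    ext <;> simp
    · linear_combination (-Real.cos h) * hxz
    · rw [he]; ring
    · ring
    · linear_combination Real.sin h * (hx2 - hz2)
  have w1 := Gam_mul hO (Gam_mul hO (hK B hB) (hBB _ hX)) (hK B hB)
  rw [kbk _ _ _ _ _ _ (Real.cos_sq_add_sin_sq B)] at w1
  have w2 := Gam_mul hO (Gam_mul hO (hBB C hC) w1) (hBB C hC)
  rw [bkb _ _ _ _ _ _ _ (Real.cos_sq_add_sin_sq C) hde] at w2
  have hq1 : Real.cos (C - A) * (2 * Real.sin B * Real.cos B) - 2 * d * Real.sin B ^ 2 * Real.sin (C - A) = Q := by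
    linear_combination -hdm
  rw [hq1] at w2
  have sB := Real.cos_sq' B
  have sC := Real.cos_sq' C
  have sX := Real.cos_sq' (C - A)
  have sw := Real.cos_sq' w
  have hp2 : (Real.cos (C - A) * (Real.cos B ^ 2 - Real.sin B ^ 2) - d * (2 * Real.sin B * Real.cos B) * Real.sin (C - A)) * (2 * Real.sin C * Real.cos C) + Real.sin (C - A) * (Real.cos C ^ 2 - Real.sin C ^ 2) - 2 * d * Real.sin C ^ 2 * Q = 0 := by
    have hne : Real.sin (C - A) * Real.sin B ^ 2 ≠ 0 := mul_ne_zero hX0 (pow_ne_zero 2 hB0)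
    refine (mul_eq_zero.1 ?_).resolve_left hne
    generalize Real.sin (C - A) = sx at *
    generalize Real.cos (C - A) = cx at *
    generalize Real.sin C = sc at *
    generalize Real.cos C = cc at *
    generalize Real.sin B = sb at *
    generalize Real.cos B = cb at *
    generalize Real.sin w = sw' at *
    generalize Real.cos w = cw at *
    generalize Real.sin A = sA at *
    clear_value d Q
    have hs1 : (cx * (cb ^ 2 - sb ^ 2) - d * (2 * sb * cb) * sx) * sb = -cx * sb + cb * Q := by
      linear_combination (-cb) * hdm + (-cx * sb) * sB
    have e1 : sx * sb ^ 2 * ((cx * (cb ^ 2 - sb ^ 2) - d * (2 * sb * cb) * sx) * (2 * sc * cc)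
        + sx * (cc ^ 2 - sc ^ 2) - 2 * d * sc ^ 2 * Q)
        = sc ^ 2 * Q ^ 2 - 2 * Q * sc * sb * cb * sA + sb ^ 2 * sA ^ 2 - sb ^ 2 * sc ^ 2 := by
      rw [hSA]
      linear_combination (2 * sc * cc * sx * sb) * hs1 - sc ^ 2 * Q * hdm - sb ^ 2 * sc ^ 2 * sX
    rw [e1]
    linear_combination (-2 * Q * sc * cb + sb * sA + sc * sw') * hAB + sc ^ 2 * (Q - cb * sw' + cw * sb) * hQ' + sc ^ 2 * sb ^ 2 * sw - sc ^ 2 * sw' ^ 2 * sB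
  rw [hp2] at w2
  simp only [zero_mul, zero_add] at w2
  have hfin : w + B ∈ HG G hT huv := by
    refine mem_of_Gam hT huv hr ?_ w2
    have n1 := congrArg Quaternion.normSq (kbk _ _ (Real.cos (C - A)) (Real.sin (C - A)) d e (Real.cos_sq_add_sin_sq B))
    rw [hq1] at n1
    have n2 := congrArg Quaternion.normSq (bkb _ _ (Real.cos (C - A) * (Real.cos B ^ 2 - Real.sin B ^ 2) - d * (2 * Real.sin B * Real.cos B) * Real.sin (C - A)) (Real.sin (C - A)) Q d e (Real.cos_sq_add_sin_sq C) hde)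
    rw [hp2] at n2
    have nk : ∀ h, Quaternion.normSq (qt (Real.cos h) 0 0 (Real.sin h)) = 1 := by
      intro h; simp [Quaternion.normSq_def']
    have nb : ∀ h, Quaternion.normSq (qt (Real.cos h) (Real.sin h * e) 0 (Real.sin h * d)) = 1 := by
      intro h; simp only [Quaternion.normSq_def', qt_re, qt_imI, qt_imJ, qt_imK]
      linear_combination Real.sin h ^ 2 * hde + Real.cos_sq_add_sin_sq h
    rw [map_mul, map_mul, nk, nb] at n1
    rw [map_mul, map_mul, nb, ← n1] at n2
    simp only [Quaternion.normSq_def', qt_re, qt_imI, qt_imJ, qt_imK] at n2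
    linear_combination -n2
  simpa using (HG G hT huv).sub_mem hfin hB

end ReflGen

/-! ### A chain of fourth proportionals -/

namespace ReflGen
open Filter Topology

/-- The `FO` operation along continuous families: the strict inequality only has to be checked at the
base point. -/
theorem FO.eventually {φ₀ : ℝ} {A B C w : ℝ → ℝ} (hA : ContinuousAt A φ₀) (hB : ContinuousAt B φ₀)
    (hC : ContinuousAt C φ₀) (hw : ContinuousAt w φ₀)
    (hid : ∀ᶠ φ in 𝓝 φ₀, Real.sin (A φ) * Real.sin (B φ) = Real.sin (C φ) * Real.sin (w φ))
    (hC0 : Real.sin (C φ₀) ≠ 0)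
    (hd : |2 * Real.cos (C φ₀ - A φ₀) * Real.sin (B φ₀) * Real.cos (B φ₀) - Real.sin (w φ₀ + B φ₀)|
      < 2 * |Real.sin (C φ₀ - A φ₀)| * Real.sin (B φ₀) ^ 2) :
    ∀ᶠ φ in 𝓝 φ₀, ∀ H : AddSubgroup ℝ, FO H → A φ ∈ H → B φ ∈ H → C φ ∈ H → w φ ∈ H := by
  have h1 : ∀ᶠ φ in 𝓝 φ₀, Real.sin (C φ) ≠ 0 :=
    ContinuousAt.eventually_ne (g := fun φ => Real.sin (C φ)) (by fun_prop) hC0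
  have h2 := ContinuousAt.eventually_lt
    (f := fun φ => |2 * Real.cos (C φ - A φ) * Real.sin (B φ) * Real.cos (B φ) - Real.sin (w φ + B φ)|)
    (g := fun φ => 2 * |Real.sin (C φ - A φ)| * Real.sin (B φ) ^ 2) (x₀ := φ₀)
    (by fun_prop) (by fun_prop) hd
  filter_upwards [hid, h1, h2] with φ e1 e2 e3 H hH a b c
  exact hH.op _ _ _ _ a b c e1 e2 e3

/-- The point `(sin x, cos x)` is within `ε` of `(s, c)` in each coordinate. -/
def Ap (x s c ε : ℝ) : Prop := |Real.sin x - s| ≤ ε ∧ |Real.cos x - c| ≤ ε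

theorem ap_mul {x y x₀ y₀ ε δ : ℝ} (hx : |x - x₀| ≤ ε) (hy : |y - y₀| ≤ δ) (hx1 : |x| ≤ 1)
    (hy1 : |y₀| ≤ 1) : |x * y - x₀ * y₀| ≤ ε + δ := by
  have : x * y - x₀ * y₀ = x * (y - y₀) + (x - x₀) * y₀ := by ring
  rw [this]
  refine (abs_add_le _ _).trans ?_
  rw [abs_mul, abs_mul]
  have := mul_le_mul hx1 hy (abs_nonneg _) zero_le_one
  have := mul_le_mul hx hy1 (abs_nonneg _) ((abs_nonneg _).trans hx)
  linarith

theorem Ap.neg {x s c ε : ℝ} (h : Ap x s c ε) : Ap (-x) (-s) c ε := by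
  refine ⟨?_, by simpa using h.2⟩
  rw [Real.sin_neg, ← abs_neg]
  convert h.1 using 2; ring

theorem Ap.add {x s c ε y s' c' δ : ℝ} (hx : Ap x s c ε) (hy : Ap y s' c' δ) (hs : |s'| ≤ 1)
    (hc : |c'| ≤ 1) : Ap (x + y) (s * c' + c * s') (c * c' - s * s') (2 * (ε + δ)) := by
  have e1 := ap_mul hx.1 hy.2 (Real.abs_sin_le_one x) hc
  have e2 := ap_mul hx.2 hy.1 (Real.abs_cos_le_one x) hs
  have e3 := ap_mul hx.1 hy.1 (Real.abs_sin_le_one x) hs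
  have e4 := ap_mul hx.2 hy.2 (Real.abs_cos_le_one x) hc
  rw [abs_le] at e1 e2 e3 e4
  constructor
  · rw [Real.sin_add, abs_le]; constructor <;> linarith
  · rw [Real.cos_add, abs_le]; constructor <;> linarith

theorem Ap.sub {x s c ε y s' c' δ : ℝ} (hx : Ap x s c ε) (hy : Ap y s' c' δ) (hs : |s'| ≤ 1)
    (hc : |c'| ≤ 1) : Ap (x - y) (s * c' - c * s') (c * c' + s * s') (2 * (ε + δ)) := by
  have := hx.add hy.neg (by simpa using hs) hc
  convert this using 1 <;> ring

theorem Ap.round {x s c ε s' c' δ : ℝ} (h : Ap x s c ε) (hs : |s - s'| + ε ≤ δ)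
    (hc : |c - c'| + ε ≤ δ) : Ap x s' c' δ :=
  ⟨(abs_sub_le _ s _).trans (by linarith [h.1]), (abs_sub_le _ c _).trans (by linarith [h.2])⟩

theorem Ap.arcsin {t s c ε : ℝ} (hs : |t - s| ≤ ε) (ht : t ^ 2 ≤ 1) (hc : ε ≤ c)
    (h1 : (c - ε) ^ 2 ≤ 1 - t ^ 2) (h2 : 1 - t ^ 2 ≤ (c + ε) ^ 2) : Ap (Real.arcsin t) s c ε := by
  have hε : 0 ≤ ε := (abs_nonneg _).trans hs
  constructor
  · rw [Real.sin_arcsin (by nlinarith) (by nlinarith)]; exact hs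
  · rw [Real.cos_arcsin, abs_le]
    have := Real.le_sqrt_of_sq_le h1
    have := Real.sqrt_le_iff.2 ⟨by linarith, h2⟩
    constructor <;> linarith

/-- The inequality in `FO`, from numerical approximations of the angles `X = C - A`, `B`, `W = w + B`. -/
theorem Ap.check {X B W sX cX sB cB sW cW ε₁ ε₂ ε₃ : ℝ} (hX : Ap X sX cX ε₁) (hB : Ap B sB cB ε₂)
    (hW : Ap W sW cW ε₃) (hs : |sB| ≤ 1) (hc : |cB| ≤ 1)
    (h : |2 * (cX * (sB * cB)) - sW| + 4 * ε₁ + 8 * ε₂ + ε₃ < 2 * (|sX| * (sB * sB))) :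
    |2 * Real.cos X * Real.sin B * Real.cos B - Real.sin W| < 2 * |Real.sin X| * Real.sin B ^ 2 := by
  have hsc : |sB * cB| ≤ 1 := by rw [abs_mul]; exact mul_le_one₀ hs (abs_nonneg _) hc
  have hss : |sB * sB| ≤ 1 := by rw [abs_mul]; exact mul_le_one₀ hs (abs_nonneg _) hs
  have e1 := ap_mul hX.2 (ap_mul hB.1 hB.2 (Real.abs_sin_le_one B) hc) (Real.abs_cos_le_one X) hsc
  have e0 : |(|Real.sin X| - |sX|)| ≤ ε₁ := (abs_abs_sub_abs_le_abs_sub _ _).trans hX.1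
  have e2 := ap_mul e0 (ap_mul hB.1 hB.1 (Real.abs_sin_le_one B) hs)
    (by rw [abs_abs]; exact Real.abs_sin_le_one X) hss
  have e3 := hW.1
  rw [abs_le] at e1 e2 e3
  have h' := abs_le.1 (le_refl |2 * (cX * (sB * cB)) - sW|)
  rw [abs_lt]
  constructor <;> linarith

/-- A base angle with rational sine and cosine, from the Pythagorean triple `28, 45, 53`, at which every
inequality needed in `chain` holds with room to spare. -/
noncomputable def phi0 : ℝ := Real.arcsin (45 / 53)

theorem sin_phi0 : Real.sin phi0 = 45 / 53 := Real.sin_arcsin (by norm_num) (by norm_num)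

theorem cos_phi0 : Real.cos phi0 = 28 / 53 := by
  rw [phi0, Real.cos_arcsin, show (1 - (45 / 53 : ℝ) ^ 2) = (28 / 53) ^ 2 by norm_num]
  exact Real.sqrt_sq (by norm_num)

/-! The angles `aV`, `aM`, `aN`, `aW`, `aH` are successive fourth proportionals, in terms of sines,
obtained from multiples of `φ`; `chain` lists the proportions. -/

noncomputable def aV (φ : ℝ) : ℝ := Real.arcsin (4 * Real.sin φ * Real.cos φ ^ 2)
noncomputable def aM (φ : ℝ) : ℝ := Real.arcsin (2 * Real.sin φ * Real.cos (2 * φ))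
noncomputable def aN (φ : ℝ) : ℝ := Real.arcsin (2 * Real.sin (3 * φ) / Real.cos φ)
noncomputable def aW (φ : ℝ) : ℝ := Real.arcsin (2 * Real.sin φ * Real.cos φ ^ 3)
noncomputable def aH (φ : ℝ) : ℝ := Real.arcsin (2 * Real.sin φ * Real.cos φ ^ 2 / Real.cos (aW φ))

theorem cos_two_phi0 : Real.cos (2 * phi0) = -1241 / 2809 := by
  rw [Real.cos_two_mul, cos_phi0]; norm_num
theorem sin_two_phi0 : Real.sin (2 * phi0) = 2520 / 2809 := by
  rw [Real.sin_two_mul, cos_phi0, sin_phi0]; norm_num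
theorem sin_three_phi0 : Real.sin (3 * phi0) = 14715 / 148877 := by
  rw [Real.sin_three_mul, sin_phi0]; norm_num
theorem cos_three_phi0 : Real.cos (3 * phi0) = -148148 / 148877 := by
  rw [Real.cos_three_mul, cos_phi0]; norm_num

theorem ap_phi : Ap phi0 (45 / 53) (28 / 53) 0 := by
  simp [Ap, sin_phi0, cos_phi0]
theorem ap_two : Ap (2 * phi0) (2520 / 2809) (-1241 / 2809) 0 := by
  simp [Ap, sin_two_phi0, cos_two_phi0]
theorem ap_three : Ap (3 * phi0) (14715 / 148877) (-148148 / 148877) 0 := by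
  simp [Ap, sin_three_phi0, cos_three_phi0]
theorem ap_V : Ap (aV phi0) 0.948 0.319 0.001 := by
  unfold aV; rw [sin_phi0, cos_phi0]; apply Ap.arcsin <;> norm_num [abs_le]
theorem ap_M : Ap (aM phi0) (-0.75) 0.661 0.001 := by
  unfold aM; rw [sin_phi0, cos_two_phi0]; apply Ap.arcsin <;> norm_num [abs_le]
theorem ap_N : Ap (aN phi0) 0.374 0.927 0.001 := by
  unfold aN; rw [sin_three_phi0, cos_phi0]; apply Ap.arcsin <;> norm_num [abs_le]
theorem ap_W : Ap (aW phi0) 0.25 0.968 0.001 := by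
  unfold aW; rw [sin_phi0, cos_phi0]; apply Ap.arcsin <;> norm_num [abs_le]

theorem ap_H : Ap (aH phi0) 0.49 0.872 0.001 := by
  have h1 : Real.sin (aW phi0) = 2 * (45 / 53) * (28 / 53) ^ 3 := by
    unfold aW; rw [sin_phi0, cos_phi0, Real.sin_arcsin (by norm_num) (by norm_num)]
  have h2 : Real.cos (aW phi0) ^ 2 = 1 - (2 * (45 / 53) * (28 / 53) ^ 3) ^ 2 := by
    rw [Real.cos_sq', h1]
  have h3 := abs_le.1 ap_W.2
  have h0 : 0 < Real.cos (aW phi0) := by linarith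
  unfold aH; rw [sin_phi0, cos_phi0];
  have h4 : (2 * (45 / 53) * (28 / 53) ^ 2 / Real.cos (aW phi0)) ^ 2 = (2 * (45 / 53) * (28 / 53) ^ 2) ^ 2 / (1 - (2 * (45 / 53) * (28 / 53) ^ 3) ^ 2) := by
    rw [div_pow, h2]
  apply Ap.arcsin
  · have l : (0.489 : ℝ) ≤ 2 * (45 / 53) * (28 / 53) ^ 2 / Real.cos (aW phi0) := by
      rw [le_div_iff₀ h0]; linarith
    have r : 2 * (45 / 53) * (28 / 53) ^ 2 / Real.cos (aW phi0) ≤ 0.491 := by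
      rw [div_le_iff₀ h0]; linarith
    rw [abs_le]; constructor <;> linarith
  all_goals (try rw [h4])
  all_goals norm_num

theorem cont_aW : ContinuousAt aW phi0 := by unfold aW; fun_prop
theorem cont_aV : ContinuousAt aV phi0 := by unfold aV; fun_prop
theorem cont_aM : ContinuousAt aM phi0 := by unfold aM; fun_prop
theorem cont_aN : ContinuousAt aN phi0 := by
  unfold aN
  refine Real.continuous_arcsin.continuousAt.comp (ContinuousAt.div (by fun_prop) (by fun_prop) ?_)
  rw [cos_phi0]; norm_num
theorem cos_aW_ne : Real.cos (aW phi0) ≠ 0 := by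
  have h3 := abs_le.1 ap_W.2
  have h0 : 0 < Real.cos (aW phi0) := by linarith
  exact h0.ne'
theorem cont_aH : ContinuousAt aH phi0 := by
  have := cont_aW
  unfold aH
  exact Real.continuous_arcsin.continuousAt.comp (ContinuousAt.div (by fun_prop) (by fun_prop) cos_aW_ne)

theorem sin_arcsin_eventually {f : ℝ → ℝ} (hf : ContinuousAt f phi0) (h1 : |f phi0| < 1) :
    ∀ᶠ φ in 𝓝 phi0, Real.sin (Real.arcsin (f φ)) = f φ := by
  filter_upwards [ContinuousAt.eventually_lt (f := fun φ => |f φ|) (g := fun _ => (1 : ℝ)) (by fun_prop)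
    (by fun_prop) h1] with φ h
  exact Real.sin_arcsin (abs_lt.1 h).1.le (abs_lt.1 h).2.le

theorem sin_aV : ∀ᶠ φ in 𝓝 phi0, Real.sin (aV φ) = 4 * Real.sin φ * Real.cos φ ^ 2 := by
  apply sin_arcsin_eventually (by fun_prop)
  rw [sin_phi0, cos_phi0, abs_lt]; norm_num
theorem sin_aM : ∀ᶠ φ in 𝓝 phi0, Real.sin (aM φ) = 2 * Real.sin φ * Real.cos (2 * φ) := by
  apply sin_arcsin_eventually (by fun_prop)
  rw [sin_phi0, cos_two_phi0, abs_lt]; norm_num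
theorem sin_aN : ∀ᶠ φ in 𝓝 phi0, Real.sin (aN φ) = 2 * Real.sin (3 * φ) / Real.cos φ := by
  apply sin_arcsin_eventually
  · refine ContinuousAt.div (by fun_prop) (by fun_prop) ?_
    rw [cos_phi0]; norm_num
  · rw [sin_three_phi0, cos_phi0, abs_lt]; norm_num
theorem sin_aW : ∀ᶠ φ in 𝓝 phi0, Real.sin (aW φ) = 2 * Real.sin φ * Real.cos φ ^ 3 := by
  apply sin_arcsin_eventually (by fun_prop)
  rw [sin_phi0, cos_phi0, abs_lt]; norm_num
theorem cos_aW_pos : ∀ᶠ φ in 𝓝 phi0, 0 < Real.cos (aW φ) := by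
  have := cont_aW
  refine ContinuousAt.eventually_lt (f := fun _ => (0 : ℝ)) (g := fun φ => Real.cos (aW φ))
    (by fun_prop) (by fun_prop) ?_
  have h3 := abs_le.1 ap_W.2
  linarith
theorem sin_aH : ∀ᶠ φ in 𝓝 phi0,
    Real.sin (aH φ) = 2 * Real.sin φ * Real.cos φ ^ 2 / Real.cos (aW φ) := by
  have := cont_aW
  apply sin_arcsin_eventually
  · exact ContinuousAt.div (by fun_prop) (by fun_prop) cos_aW_ne
  · have h3 := abs_le.1 ap_W.2
    have h0 : 0 < Real.cos (aW phi0) := by linarith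
    rw [sin_phi0, cos_phi0, abs_of_nonneg (by positivity), div_lt_one h0]; linarith

theorem cos_pos : ∀ᶠ φ in 𝓝 phi0, 0 < Real.cos φ := by
  refine ContinuousAt.eventually_lt (f := fun _ => (0 : ℝ)) (g := fun φ => Real.cos φ)
    (by fun_prop) (by fun_prop) ?_
  rw [cos_phi0]; norm_num

/-- Five applications of `FO`, valid for all `φ` near `phi0`:
`sin 2φ * sin 2φ = sin φ * sin aV`,
`sin 4φ * sin φ = sin 2φ * sin aM`,
`sin (aV + aM) * sin (aV - aM) = sin 2φ * sin aN`,
`sin 3φ * sin aV = sin aN * sin (π - aW)`,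
`sin (-aW) * sin aV = sin (2 aW) * sin (-aH)`. -/
theorem chain : ∀ᶠ φ in 𝓝 phi0, ∀ H : AddSubgroup ℝ, FO H → φ ∈ H → aH φ ∈ H := by
  have cV := cont_aV
  have cM := cont_aM
  have cN := cont_aN
  have cW := cont_aW
  have cH := cont_aH
  have sV : ∀ᶠ φ in 𝓝 phi0, ∀ H : AddSubgroup ℝ, FO H → 2 * φ ∈ H → 2 * φ ∈ H → φ ∈ H → aV φ ∈ H := by
    apply FO.eventually (by fun_prop) (by fun_prop) (by fun_prop) cV
    · filter_upwards [sin_aV] with φ h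
      rw [h, Real.sin_two_mul]; ring
    · rw [sin_phi0]; norm_num
    · exact Ap.check (ap_phi.sub ap_two (by norm_num [abs_le]) (by norm_num [abs_le])) ap_two
        (ap_V.add ap_two (by norm_num [abs_le]) (by norm_num [abs_le])) (by norm_num [abs_le]) (by norm_num [abs_le]) (by norm_num [abs_of_nonneg, abs_of_nonpos])
  have sM : ∀ᶠ φ in 𝓝 phi0, ∀ H : AddSubgroup ℝ, FO H → 2 * φ + 2 * φ ∈ H → φ ∈ H → 2 * φ ∈ H → aM φ ∈ H := by
    apply FO.eventually (by fun_prop) (by fun_prop) (by fun_prop) cM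
    · filter_upwards [sin_aM] with φ h
      rw [h, Real.sin_add]; ring
    · rw [sin_two_phi0]; norm_num
    · refine Ap.check (ap_two.sub (ap_two.add ap_two ?_ ?_) ?_ ?_) ap_phi
        (ap_M.add ap_phi ?_ ?_) ?_ ?_ ?_ <;> norm_num [abs_le, abs_of_nonneg, abs_of_nonpos]
  have sN : ∀ᶠ φ in 𝓝 phi0, ∀ H : AddSubgroup ℝ, FO H → aV φ + aM φ ∈ H → aV φ - aM φ ∈ H → 2 * φ ∈ H → aN φ ∈ H := by
    apply FO.eventually (by fun_prop) (by fun_prop) (by fun_prop) cN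
    · filter_upwards [sin_aN, sin_aV, sin_aM, cos_pos] with φ h hV hM hc
      have e : Real.sin (aV φ + aM φ) * Real.sin (aV φ - aM φ) = Real.sin (aV φ) ^ 2 - Real.sin (aM φ) ^ 2 := by
        rw [Real.sin_add, Real.sin_sub]
        linear_combination Real.sin (aV φ) ^ 2 * Real.cos_sq' (aM φ) - Real.sin (aM φ) ^ 2 * Real.cos_sq' (aV φ)
      rw [e, h, hV, hM, Real.sin_two_mul, Real.sin_three_mul, Real.cos_two_mul]
      field_simp
      linear_combination 16 * Real.sin φ ^ 2 * Real.cos_sq' φ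
    · rw [sin_two_phi0]; norm_num
    · refine Ap.check (ap_two.sub (ap_V.add ap_M ?_ ?_) ?_ ?_) (ap_V.sub ap_M ?_ ?_)
        (ap_N.add (ap_V.sub ap_M ?_ ?_) ?_ ?_) ?_ ?_ ?_ <;> norm_num [abs_le, abs_of_nonneg, abs_of_nonpos]
  have sW : ∀ᶠ φ in 𝓝 phi0, ∀ H : AddSubgroup ℝ, FO H → 3 * φ ∈ H → aV φ ∈ H → aN φ ∈ H → Real.pi - aW φ ∈ H := by
    apply FO.eventually (by fun_prop) (by fun_prop) (by fun_prop) (by fun_prop)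
    · filter_upwards [sin_aN, sin_aV, sin_aW, cos_pos] with φ h hV hW hc
      rw [h, hV, Real.sin_pi_sub, hW]
      field_simp
      ring
    · have := abs_le.1 ap_N.1
      intro h; linarith
    · have e : Ap (Real.pi - aW phi0) 0.25 (-0.968) 0.001 := by
        have := ap_W.neg
        refine ⟨by rw [Real.sin_pi_sub]; exact ap_W.1, ?_⟩
        rw [Real.cos_pi_sub, ← abs_neg]; convert ap_W.2 using 2; ring
      refine Ap.check (ap_N.sub ap_three ?_ ?_) ap_V
        (e.add ap_V ?_ ?_) ?_ ?_ ?_ <;> norm_num [abs_le, abs_of_nonneg, abs_of_nonpos]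
  have sH : ∀ᶠ φ in 𝓝 phi0, ∀ H : AddSubgroup ℝ, FO H → -aW φ ∈ H → aV φ ∈ H → aW φ + aW φ ∈ H → - aH φ ∈ H := by
    apply FO.eventually (by fun_prop) (by fun_prop) (by fun_prop) (by fun_prop)
    · filter_upwards [sin_aH, sin_aV, sin_aW, cos_aW_pos] with φ h hV hW hc
      rw [Real.sin_neg, Real.sin_neg, h, hV, Real.sin_add]
      field_simp
      ring
    · have := abs_le.1 (ap_W.add ap_W (by norm_num [abs_le]) (by norm_num [abs_le])).1
      intro h; linarith
    · refine Ap.check ((ap_W.add ap_W ?_ ?_).sub ap_W.neg ?_ ?_) ap_V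
        (ap_H.neg.add ap_V ?_ ?_) ?_ ?_ ?_ <;> norm_num [abs_le, abs_of_nonneg, abs_of_nonpos]
  filter_upwards [sV, sM, sN, sW, sH] with φ hV hM hN hW hH H hF h1
  have h2 : 2 * φ ∈ H := by rw [two_mul]; exact H.add_mem h1 h1
  have h3 : 3 * φ ∈ H := by
    have := H.add_mem h2 h1; convert this using 1; ring
  have v := hV H hF h2 h2 h1
  have m := hM H hF (H.add_mem h2 h2) h1 h2
  have nn := hN H hF (H.add_mem v m) (H.sub_mem v m) h2
  have w : aW φ ∈ H := by simpa using H.sub_mem hF.pi_mem (hW H hF h3 v nn)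
  simpa using H.neg_mem (hH H hF (H.neg_mem w) v (H.add_mem w w))

end ReflGen

/-! ### Filling a plane with rotations -/

namespace ReflGen
open Quaternion Filter Topology
variable {n : ℕ}

/-- A subgroup of `ℝ` containing a nondegenerate interval is everything. -/
theorem eq_top_of_preconnected {H : AddSubgroup ℝ} {S : Set ℝ} (hS : IsPreconnected S)
    (hSH : S ⊆ H) {x y : ℝ} (hx : x ∈ S) (hy : y ∈ S) (hxy : x < y) : H = ⊤ := by
  have hI : Set.Icc x y ⊆ H := (hS.Icc_subset hx hy).trans hSH
  rw [eq_top_iff]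
  intro z _
  obtain ⟨k, hk⟩ := exists_nat_gt (|z| / (y - x))
  have hL : 0 < y - x := sub_pos.2 hxy
  have hk0 : (0 : ℝ) < k := lt_of_le_of_lt (by positivity) hk
  rw [div_lt_iff₀ hL] at hk
  have h1 : |z / k| ≤ y - x := by
    rw [abs_div, abs_of_pos hk0, div_le_iff₀ hk0]; linarith
  have h2 : ∀ t, 0 ≤ t → t ≤ y - x → t ∈ H := by
    intro t h0 h1
    have := H.sub_mem (hI (show x + t ∈ Set.Icc x y from ⟨by linarith, by linarith⟩)) (hI (show x ∈ Set.Icc x y from ⟨by linarith, by linarith⟩))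
    simpa using this
  have h3 : z / k ∈ H := by
    rcases abs_cases (z / k) with ⟨e, h⟩ | ⟨e, h⟩
    · exact h2 _ h (by linarith)
    · have := H.neg_mem (h2 (-(z / k)) (by linarith) (by linarith))
      simpa using this
  have h4 := H.nsmul_mem h3 k
  rwa [nsmul_eq_mul, mul_div_cancel₀ _ hk0.ne'] at h4

/-- The sine of the half-angle produced by `closing_step`. -/
noncomputable def gg (φ : ℝ) : ℝ := 2 * Real.cos φ * Real.sin φ ^ 2 / Real.cos (aW φ)

/-- Every `φ` near `phi0` produces the half-angle `arcsin (gg φ)` in the plane of `u, v`. Writing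
`i, j, k` for the axes of an adapted frame, a suitably tilted reflection in `G` conjugates the half-turn
about `k` so that the product with the half-turn is the rotation about `j` with half-angle `φ / 2`.
By `chain` the rotation about `j` with half-angle `aH φ` is in `G` as well, and the quarter-turn about
`k` (half-angle `π / 4`) carries rotations about `j` to rotations about `i`. The word
`j(φ/2) i(φ) j(φ/2) * i(∓aH φ) * j(-φ/2) i(φ) j(-φ/2)` is then a rotation about `k`, with sine `gg φ`.
The frame depends on `φ`, but the plane of `u, v` does not. -/
theorem closing_step {G : Submonoid (Matrix (Fin n) (Fin n) ℝ)} (hT : ∀ g ∈ G, gᵀ ∈ G) (hD : Dns G)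
    {u v : Fin n → ℝ} (huv : Ortho u v) (h4 : Real.pi / 4 ∈ HG G hT huv) {φ : ℝ}
    (hφ0 : 0 < φ) (hφ1 : φ < Real.pi)
    (hch : ∀ H : AddSubgroup ℝ, FO H → φ ∈ H → aH φ ∈ H)
    (hsH : Real.sin (aH φ) = 2 * Real.sin φ * Real.cos φ ^ 2 / Real.cos (aW φ))
    (hsW : Real.sin (aW φ) = 2 * Real.sin φ * Real.cos φ ^ 3) (hcW : 0 < Real.cos (aW φ)) :
    Real.arcsin (gg φ) ∈ HG G hT huv ∧ |gg φ| ≤ 1 := by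
  set δ := φ / 4 with hδ
  have hs0 : 0 < Real.sin δ := Real.sin_pos_of_pos_of_lt_pi (by linarith) (by linarith [Real.pi_pos])
  have hc0 : 0 < Real.cos δ := Real.cos_pos_of_mem_Ioo ⟨by linarith, by linarith⟩
  have hsc := Real.sin_sq_add_cos_sq δ
  have hlt : Real.sin δ ^ 2 < 1 := by nlinarith [pow_pos hc0 2]
  obtain ⟨y, hy, hyG, hys⟩ := hD u v huv (Real.sin δ ^ 2) (by positivity) hlt
  obtain ⟨a, b, c, hO, hr, hya⟩ := exists_frame huv hy (by positivity) hlt hys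
  rw [← Real.cos_sq', Real.sqrt_sq hs0.le, Real.sqrt_sq hc0.le] at hya
  rw [hya] at hyG
  have hK : ∀ h ∈ HG G hT huv, qt (Real.cos h) 0 0 (Real.sin h) ∈ Gam G a b c :=
    fun h hh => (Gam_of_mem hT huv hr h).2 hh
  have hk : qt 0 0 0 1 ∈ Gam G a b c := by
    have := hK _ ((HG G hT huv).add_mem h4 h4)
    rw [show Real.pi / 4 + Real.pi / 4 = Real.pi / 2 by ring] at this
    simpa using this
  have hca : Ortho c a := ⟨hO.cc, hO.aa, by rw [dotProduct_comm]; exact hO.ac⟩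
  set E := HG G hT hca with hE
  have hEj : ∀ h, h ∈ E ↔ qt (Real.cos h) 0 (Real.sin h) 0 ∈ Gam G a b c := by
    intro h
    change rot c a h ∈ G ↔ lift _ _ ∈ G
    rw [lift_j]
  have hφ2 : φ / 2 ∈ E := by
    rw [hEj]
    have := Gam_mul hO (Gam_conj hO hsc hyG hk) hk
    convert this using 1
    rw [show φ / 2 = 2 * δ by rw [hδ]; ring, Real.cos_two_mul, Real.sin_two_mul]
    ext <;> simp
    · linear_combination hsc
    · ring
  have hφ : φ ∈ E := by
    have := E.add_mem hφ2 hφ2; simpa using this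
  have hh : aH φ ∈ E := hch E (FO_HG hT hD hca) hφ
  have hF : ∀ h ∈ E, qt (Real.cos h) (Real.sin h) 0 0 ∈ Gam G a b c := by
    intro h hh
    have := Gam_mul hO (Gam_mul hO (hK _ h4) ((hEj _).1 (E.neg_mem hh))) (hK _ ((HG G hT huv).neg_mem h4))
    convert this using 1
    have h2 : √2 * √2 = (2:ℝ) := Real.mul_self_sqrt (by norm_num)
    ext <;> simp
    · linear_combination -(1/2) * Real.cos h * h2
    · linear_combination -(1/2) * Real.sin h * h2
  set S := Real.sin φ with hS
  set k := Real.cos φ with hk'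
  have hkS : k ^ 2 + S ^ 2 = 1 := Real.cos_sq_add_sin_sq φ
  have q1 : qt (k ^ 2) S (k * S) 0 ∈ Gam G a b c := by
    have := Gam_mul hO (Gam_mul hO ((hEj _).1 hφ2) (hF _ hφ)) ((hEj _).1 hφ2)
    convert this using 1
    have e1 : k = Real.cos (φ / 2) ^ 2 - Real.sin (φ / 2) ^ 2 := by
      rw [hk', ← Real.cos_two_mul']; ring_nf
    have e2 : S = 2 * Real.sin (φ / 2) * Real.cos (φ / 2) := by
      rw [hS, ← Real.sin_two_mul]; ring_nf
    have e3 := Real.cos_sq_add_sin_sq (φ / 2)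
    ext <;> simp
    · linear_combination k * e1
    · linear_combination -S * e3
    · linear_combination k * e2
    · ring
  have q2 : qt (k ^ 2) S (-(k * S)) 0 ∈ Gam G a b c := by
    have := Gam_mul hO (Gam_mul hO ((hEj _).1 (E.neg_mem hφ2)) (hF _ hφ)) ((hEj _).1 (E.neg_mem hφ2))
    convert this using 1
    have e1 : k = Real.cos (φ / 2) ^ 2 - Real.sin (φ / 2) ^ 2 := by
      rw [hk', ← Real.cos_two_mul']; ring_nf
    have e2 : S = 2 * Real.sin (φ / 2) * Real.cos (φ / 2) := by
      rw [hS, ← Real.sin_two_mul]; ring_nf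
    have e3 := Real.cos_sq_add_sin_sq (φ / 2)
    ext <;> simp
    · linear_combination k * e1
    · linear_combination -S * e3
    · linear_combination -k * e2
    · ring
  set D := Real.cos (aW φ) with hDD
  have hD2 : D ^ 2 = 1 - 4 * S ^ 2 * k ^ 6 := by
    rw [hDD, Real.cos_sq', hsW]; ring
  set L := (k ^ 4 - S ^ 2 - k ^ 2 * S ^ 2) / D with hL
  have hLs : L ^ 2 + Real.sin (aH φ) ^ 2 = 1 := by
    rw [hsH, hL]
    field_simp
    rw [hD2]
    have : S ^ 2 = 1 - k ^ 2 := by linarith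
    linear_combination ((1 + k ^ 2) ^ 2 * (S ^ 2 + (1 - k ^ 2)) + 2 * k ^ 4 * (1 + k ^ 2)) * this
  have q3 : qt L (-Real.sin (aH φ)) 0 0 ∈ Gam G a b c := by
    rcases qt_eq_of_sin hLs with e | e
    · have := hF _ (E.neg_mem hh)
      rw [e]; simpa using this
    · have := Gam_neg (hF _ hh)
      convert this using 1
      rw [e, Real.cos_pi_sub]
      ext <;> simp
  have q4 := Gam_mul hO (Gam_mul hO q1 q3) q2
  have e4 : qt (k ^ 2) S (k * S) 0 * qt L (-Real.sin (aH φ)) 0 0 * qt (k ^ 2) S (-(k * S)) 0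
      = qt (L * (k ^ 4 - S ^ 2 + k ^ 2 * S ^ 2) + 2 * k ^ 2 * S * Real.sin (aH φ)) 0 0 (gg φ) := by
    rw [hsH, hL, gg, ← hS, ← hk', ← hDD]
    ext <;> simp <;> field_simp <;> ring_nf
    linear_combination 2 * k * S ^ 2 * (k ^ 2 + 1) * hkS
  have n4 := congrArg Quaternion.normSq e4
  have nq : Quaternion.normSq (qt (k ^ 2) S (k * S) 0) = 1 := by
    simp only [Quaternion.normSq_def', qt_re, qt_imI, qt_imJ, qt_imK]
    linear_combination (k ^ 2 + 1) * hkS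
  have nq' : Quaternion.normSq (qt (k ^ 2) S (-(k * S)) 0) = 1 := by
    simp only [Quaternion.normSq_def', qt_re, qt_imI, qt_imJ, qt_imK]
    linear_combination (k ^ 2 + 1) * hkS
  have n3 : Quaternion.normSq (qt L (-Real.sin (aH φ)) 0 0) = 1 := by
    simp only [Quaternion.normSq_def', qt_re, qt_imI, qt_imJ, qt_imK]
    linear_combination hLs
  rw [map_mul, map_mul, nq, nq', n3] at n4
  simp only [Quaternion.normSq_def', qt_re, qt_imI, qt_imJ, qt_imK] at n4
  rw [e4] at q4
  have hg2 : gg φ ^ 2 ≤ 1 := by nlinarith [sq_nonneg (L * (k ^ 4 - S ^ 2 + k ^ 2 * S ^ 2) + 2 * k ^ 2 * S * Real.sin (aH φ))]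
  have hg1 := (sq_le_one_iff_abs_le_one _).1 hg2
  refine ⟨?_, hg1⟩
  have hsa := Real.sin_arcsin (abs_le.1 hg1).1 (abs_le.1 hg1).2
  refine mem_of_Gam hT huv hr (s := L * (k ^ 4 - S ^ 2 + k ^ 2 * S ^ 2) + 2 * k ^ 2 * S * Real.sin (aH φ)) ?_ (by rw [hsa]; exact q4)
  rw [hsa]; linear_combination -n4

/-- If `gg` were constant, a nonzero polynomial in `cos φ` would vanish on an interval. -/
theorem gg_not_const {ε : ℝ} (hε : 0 < ε) (hpos : ∀ φ ∈ Set.Ioo (phi0 - ε) (phi0 + ε),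
      0 < φ ∧ φ < Real.pi ∧ Real.sin (aW φ) = 2 * Real.sin φ * Real.cos φ ^ 3 ∧ 0 < Real.cos (aW φ)) :
    ∃ φ ∈ Set.Ioo (phi0 - ε) (phi0 + ε), gg φ ≠ gg phi0 := by
  by_contra! hcon
  have hinf : (Set.Ioo (phi0 - ε) (phi0 + ε)).Infinite := Set.Ioo_infinite (by linarith)
  set κ := gg phi0 ^ 2
  let p : Polynomial ℝ := Polynomial.C 4 * Polynomial.X ^ 2 * (1 - Polynomial.X ^ 2) ^ 2
    - Polynomial.C κ * (1 - 4 * (1 - Polynomial.X ^ 2) * Polynomial.X ^ 6)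
  have hp : p = 0 := by
    refine Polynomial.eq_zero_of_infinite_isRoot p ?_
    have hinj : Set.InjOn Real.cos (Set.Ioo (phi0 - ε) (phi0 + ε)) :=
      Real.injOn_cos.mono (fun φ hφ =>
        (⟨(hpos φ hφ).1.le, (hpos φ hφ).2.1.le⟩ : φ ∈ Set.Icc 0 Real.pi))
    refine (hinf.image hinj).mono ?_
    rintro _ ⟨φ, hφ, rfl⟩
    obtain ⟨_, _, h3, h4⟩ := hpos φ hφ
    have e := hcon φ hφ
    have e2 : gg φ ^ 2 = κ := by rw [e]
    have e3 := Real.cos_sq' (aW φ)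
    rw [h3] at e3
    rw [gg, div_pow, div_eq_iff (by positivity), e3] at e2
    have e4 := Real.sin_sq φ
    have e5 : Real.sin φ ^ 4 = (1 - Real.cos φ ^ 2) ^ 2 := by rw [← e4]; ring
    change p.eval (Real.cos φ) = 0
    simp only [p, Polynomial.eval_sub, Polynomial.eval_mul, Polynomial.eval_C, Polynomial.eval_pow, Polynomial.eval_X, Polynomial.eval_one, Polynomial.eval_ofNat]
    linear_combination e2 - 4 * Real.cos φ ^ 2 * e5 + (- 4 * κ * Real.cos φ ^ 6) * e4
  have h0 : p.eval 0 = 0 := by rw [hp]; simp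
  have h1 : p.eval (1/2) = 0 := by rw [hp]; simp
  simp [p] at h0
  norm_num [p, h0] at h1

/-- Since `φ ↦ arcsin (gg φ)` is continuous and not constant near `phi0`, the half-angles in the plane of
`u, v` fill an interval. -/
theorem HG_eq_top {G : Submonoid (Matrix (Fin n) (Fin n) ℝ)} (hT : ∀ g ∈ G, gᵀ ∈ G) (hD : Dns G)
    {u v : Fin n → ℝ} (huv : Ortho u v) (h4 : Real.pi / 4 ∈ HG G hT huv) : HG G hT huv = ⊤ := by
  have h0 : 0 < phi0 := Real.arcsin_pos.2 (by norm_num)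
  have h1 : phi0 < Real.pi := by
    have := Real.arcsin_le_pi_div_two (45 / 53)
    have := Real.pi_pos
    unfold phi0; linarith
  have hev : ∀ᶠ φ in 𝓝 phi0, (0 < φ ∧ φ < Real.pi) ∧ (∀ H : AddSubgroup ℝ, FO H → φ ∈ H → aH φ ∈ H) ∧
      (Real.sin (aH φ) = 2 * Real.sin φ * Real.cos φ ^ 2 / Real.cos (aW φ)) ∧
      Real.sin (aW φ) = 2 * Real.sin φ * Real.cos φ ^ 3 ∧ 0 < Real.cos (aW φ) := by
    filter_upwards [Ioo_mem_nhds h0 h1, chain, sin_aH, sin_aW, cos_aW_pos] with φ a b c d e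
    exact ⟨a, b, c, d, e⟩
  obtain ⟨ε, hε, hball⟩ := Metric.eventually_nhds_iff_ball.1 hev
  rw [Real.ball_eq_Ioo] at hball
  obtain ⟨φ, hφ, hne⟩ := gg_not_const hε fun φ hφ =>
    ⟨(hball φ hφ).1.1, (hball φ hφ).1.2, (hball φ hφ).2.2.2.1, (hball φ hφ).2.2.2.2⟩
  have hst : ∀ φ ∈ Set.Ioo (phi0 - ε) (phi0 + ε), Real.arcsin (gg φ) ∈ HG G hT huv ∧ |gg φ| ≤ 1 := by
    intro φ hφ
    obtain ⟨a, b, c, d, e⟩ := hball φ hφ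
    exact closing_step hT hD huv h4 a.1 a.2 b c d e
  have hc : ContinuousOn (fun φ => Real.arcsin (gg φ)) (Set.Ioo (phi0 - ε) (phi0 + ε)) := by
    intro φ hφ
    obtain ⟨_, _, _, _, e⟩ := hball φ hφ
    refine (Real.continuous_arcsin.continuousAt.comp ?_).continuousWithinAt
    unfold gg aW
    exact ContinuousAt.div (by fun_prop) (by fun_prop) e.ne'
  have hpre := (isPreconnected_Ioo (a := phi0 - ε) (b := phi0 + ε)).image _ hc
  have hsub : (fun φ => Real.arcsin (gg φ)) '' Set.Ioo (phi0 - ε) (phi0 + ε) ⊆ HG G hT huv := by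
    rintro _ ⟨φ, hφ, rfl⟩
    exact (hst φ hφ).1
  have hm : phi0 ∈ Set.Ioo (phi0 - ε) (phi0 + ε) := ⟨by linarith, by linarith⟩
  have hne' : Real.arcsin (gg φ) ≠ Real.arcsin (gg phi0) := by
    have a := abs_le.1 (hst φ hφ).2
    have b := abs_le.1 (hst phi0 hm).2
    intro h
    exact hne ((Real.arcsin_inj a.1 a.2 b.1 b.2).1 h)
  rcases lt_or_gt_of_ne hne' with h | h
  · exact eq_top_of_preconnected hpre hsub ⟨φ, hφ, rfl⟩ ⟨phi0, hm, rfl⟩ h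
  · exact eq_top_of_preconnected hpre hsub ⟨phi0, hm, rfl⟩ ⟨φ, hφ, rfl⟩ h

end ReflGen

/-! ### Reflection-closed sets in an inner product space -/

namespace ReflGen
open Module
section StepUp
variable {E : Type*} [NormedAddCommGroup E] [InnerProductSpace ℝ E]

/-- A set of unit vectors that is stable under the reflections in its own members. -/
def ReflClosed (Q : Set E) : Prop :=
  (∀ x ∈ Q, ‖x‖ = 1) ∧ ∀ x ∈ Q, ∀ y ∈ Q, y - (2 * inner ℝ x y) • x ∈ Q

theorem ReflClosed.neg_mem {Q : Set E} (hQ : ReflClosed Q) {x : E} (hx : x ∈ Q) : -x ∈ Q := by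
  have h := hQ.2 x hx x hx
  rw [real_inner_self_eq_norm_sq, hQ.1 x hx] at h
  convert h using 1
  module

/-- Reflecting the point of angle `t` in the point of angle `s` gives, up to sign, the point of angle `2 * s - t`. -/
theorem ReflClosed.angle {Q : Set E} (hQ : ReflClosed Q) {a b : E} (ha : ‖a‖ = 1) (hb : ‖b‖ = 1)
    (hab : inner ℝ a b = 0) {s t : ℝ} (hs : Real.cos s • a + Real.sin s • b ∈ Q)
    (ht : Real.cos t • a + Real.sin t • b ∈ Q) :
    Real.cos (2 * s - t) • a + Real.sin (2 * s - t) • b ∈ Q := by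
  have h := hQ.neg_mem (hQ.2 _ hs _ ht)
  have hba : inner ℝ b a = 0 := by rw [real_inner_comm]; exact hab
  have e : inner ℝ (Real.cos s • a + Real.sin s • b) (Real.cos t • a + Real.sin t • b) = Real.cos (s - t) := by
    simp only [inner_add_left, inner_add_right, inner_smul_left, inner_smul_right, hab, hba,
      real_inner_self_eq_norm_sq, ha, hb, Real.cos_sub]
    simp; ring
  rw [e] at h
  convert h using 1
  have e1 : Real.cos (2 * s - t) = 2 * Real.cos (s - t) * Real.cos s - Real.cos t := by
    have a1 : 2 * s - t = s + (s - t) := by ring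
    have a2 : t = s - (s - t) := by ring
    have a3 : Real.cos t = Real.cos (s - (s - t)) := by rw [← a2]
    rw [a1, a3, Real.cos_add, Real.cos_sub s (s - t)]; ring
  have e2 : Real.sin (2 * s - t) = 2 * Real.cos (s - t) * Real.sin s - Real.sin t := by
    have a1 : 2 * s - t = s + (s - t) := by ring
    have a2 : t = s - (s - t) := by ring
    have a3 : Real.sin t = Real.sin (s - (s - t)) := by rw [← a2]
    rw [a1, a3, Real.sin_add, Real.sin_sub s (s - t)]; ring
  rw [e1, e2]
  module

/-- A reflection-closed set containing an arc of a great circle contains the whole circle, since angles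
can be doubled. -/
theorem ReflClosed.circle {Q : Set E} (hQ : ReflClosed Q) {a b : E} (ha : ‖a‖ = 1) (hb : ‖b‖ = 1)
    (hab : inner ℝ a b = 0) {η : ℝ} (hη : 0 < η)
    (h : ∀ t, |Real.sin t| ≤ η → 0 ≤ Real.cos t → Real.cos t • a + Real.sin t • b ∈ Q) (t : ℝ) :
    Real.cos t • a + Real.sin t • b ∈ Q := by
  have hd : ∀ k : ℕ, ∀ t, |t| ≤ min η 1 * 2 ^ k → Real.cos t • a + Real.sin t • b ∈ Q := by
    intro k
    induction k with
    | zero =>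
      intro t ht
      rw [pow_zero, mul_one, le_min_iff] at ht
      refine h t (Real.abs_sin_le_abs.trans ht.1) ?_
      have := abs_le.1 ht.2
      have := Real.pi_gt_three
      exact Real.cos_nonneg_of_mem_Icc ⟨by linarith, by linarith⟩
    | succ k ih =>
      intro t ht
      have h1 := ih (t / 2) (by
        rw [abs_div, abs_two, div_le_iff₀ two_pos, mul_assoc, ← pow_succ]; exact ht)
      have h0 := ih 0 (by rw [abs_zero]; positivity)
      have := hQ.angle ha hb hab h1 h0
      convert this using 3 <;> ring_nf
  obtain ⟨k, hk⟩ := pow_unbounded_of_one_lt (|t| / min η 1) (one_lt_two : (1:ℝ) < 2)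
  refine hd k t ?_
  rw [div_lt_iff₀ (by positivity)] at hk
  linarith

/-- The reflection in `p - p'` exchanges `p` and `p'` and fixes `Vᗮ`. -/
theorem ReflClosed.move {Q : Set E} (hQ : ReflClosed Q) {V : Submodule ℝ E}
    (hV : ∀ x ∈ V, ‖x‖ = 1 → x ∈ Q) {c : E} (hc : c ∈ Vᗮ) {p p' : E} (hp : p ∈ V) (hp' : p' ∈ V)
    (hn : ‖p‖ = ‖p'‖) (h : p + c ∈ Q) : p' + c ∈ Q := by
  by_cases e : p = p'
  · rwa [← e]
  have hN : ‖p - p'‖ ≠ 0 := norm_ne_zero_iff.2 (sub_ne_zero.2 e)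
  have hm : p - p' ∈ V := V.sub_mem hp hp'
  have hx := hV (‖p - p'‖⁻¹ • (p - p')) (V.smul_mem _ hm) (by
    rw [norm_smul, norm_inv, norm_norm, inv_mul_cancel₀ hN])
  have h2 := hQ.2 _ hx _ h
  have hin : 2 * inner ℝ (p - p') (p + c) = ‖p - p'‖ ^ 2 := by
    rw [inner_add_right, hc _ hm, norm_sub_sq_real, inner_sub_left, real_inner_self_eq_norm_sq,
      real_inner_comm, ← hn]
    ring
  convert h2 using 1
  rw [inner_smul_left, smul_smul]
  have : 2 * ((starRingEnd ℝ) ‖p - p'‖⁻¹ * inner ℝ (p - p') (p + c)) * ‖p - p'‖⁻¹ = 1 := by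
    simp only [conj_trivial]
    calc _ = (2 * inner ℝ (p - p') (p + c)) * (‖p - p'‖⁻¹) ^ 2 := by ring
      _ = 1 := by rw [hin]; field_simp
  rw [this]
  module

/-- A connected spanning set of unit vectors is not contained in `V ∪ Vᗮ`. -/
theorem exists_ne_both [FiniteDimensional ℝ E] {C : Set E} (hC : IsPreconnected C) (hsp : Submodule.span ℝ C = ⊤) (hC1 : ∀ x ∈ C, ‖x‖ = 1)
    {V : Submodule ℝ E} (hV0 : V ≠ ⊥) (hV : V ≠ ⊤) : ∃ w ∈ C, w ∉ V ∧ w ∉ Vᗮ := by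
  by_contra! hcon
  have h1 : ∃ w ∈ C, w ∉ V := by
    by_contra! h
    exact hV (eq_top_iff.2 (hsp ▸ Submodule.span_le.2 h))
  have h2 : ∃ w ∈ C, w ∈ V := by
    by_contra! h
    have : Vᗮ = ⊤ := eq_top_iff.2 (hsp ▸ Submodule.span_le.2 fun w hw => hcon w hw (h w hw))
    exact hV0 ((Submodule.orthogonal_eq_top_iff V).1 this)
  obtain ⟨a, ha, haV⟩ := h1
  obtain ⟨b, hb, hbV⟩ := h2
  have haV' := hcon a ha haV
  have hf : Continuous fun x : E => ‖V.starProjection x‖ := by fun_prop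
  have fa : ‖V.starProjection a‖ = 0 := by
    rw [(Submodule.starProjection_apply_eq_zero_iff V).2 haV', norm_zero]
  have fb : ‖V.starProjection b‖ = 1 := by
    rw [Submodule.starProjection_eq_self_iff.2 hbV, hC1 b hb]
  obtain ⟨w, hw, hw2⟩ := hC.intermediate_value ha hb hf.continuousOn
    (show (1/2 : ℝ) ∈ Set.Icc _ _ by rw [fa, fb]; norm_num)
  simp only at hw2
  by_cases hwV : w ∈ V
  · rw [Submodule.starProjection_eq_self_iff.2 hwV, hC1 w hw] at hw2; norm_num at hw2
  · rw [(Submodule.starProjection_apply_eq_zero_iff V).2 (hcon w hw hwV), norm_zero] at hw2; norm_num at hw2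

/-- A reflection-closed set containing a connected spanning set `C` and the unit sphere of a proper
subspace `V` of dimension at least two contains the unit sphere of a larger subspace. Take `w = p + q` in `C` with nonzero components along `V` and `Vᗮ`. Rotating `p` inside `V` and
reflecting a unit vector of `V` gives vectors with every sufficiently small component along `q`; their
`V`-part can be moved freely, and each great circle through `q / ‖q‖` and `V` is filled by doubling. -/
theorem step_one [FiniteDimensional ℝ E] {Q : Set E} (hQ : ReflClosed Q) {C : Set E}
    (hC : IsPreconnected C) (hCQ : C ⊆ Q) (hsp : Submodule.span ℝ C = ⊤)
    {V : Submodule ℝ E} (hV2 : 2 ≤ finrank ℝ V) (hV : ∀ x ∈ V, ‖x‖ = 1 → x ∈ Q) (hVt : V ≠ ⊤) :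
    ∃ V' : Submodule ℝ E, V < V' ∧ ∀ x ∈ V', ‖x‖ = 1 → x ∈ Q := by
  have hV0 : V ≠ ⊥ := by
    rintro rfl
    simp at hV2
  obtain ⟨w, hw, hwV, hwO⟩ := exists_ne_both hC hsp (fun x hx => hQ.1 x (hCQ hx)) hV0 hVt
  let bas := stdOrthonormalBasis ℝ V
  obtain ⟨e₁, h1V, e₂, h2V, n1, n2, n12⟩ : ∃ e₁ ∈ V, ∃ e₂ ∈ V, ‖e₁‖ = 1 ∧ ‖e₂‖ = 1 ∧ inner ℝ e₁ e₂ = 0 :=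
    ⟨_, (bas ⟨0, by omega⟩).2, _, (bas ⟨1, by omega⟩).2, bas.orthonormal.1 _, bas.orthonormal.1 _,
      bas.orthonormal.2 (by simp)⟩
  have n21 : inner ℝ e₂ e₁ = 0 := by rw [real_inner_comm]; exact n12
  set p := V.starProjection w with hp
  set q := w - p with hq
  have hpV : p ∈ V := Submodule.starProjection_apply_mem _ _
  have hqV : q ∈ Vᗮ := Submodule.sub_starProjection_mem_orthogonal _
  have hp0 : 0 < ‖p‖ := by
    rw [norm_pos_iff]; intro h
    exact hwO ((Submodule.starProjection_apply_eq_zero_iff V).1 h)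
  have hq0 : 0 < ‖q‖ := by
    rw [norm_pos_iff]; intro h
    apply hwV
    rw [sub_eq_zero.1 h]; exact hpV
  have hw1 : w = p + q := by rw [hq]; abel
  have hpq : inner ℝ p q = 0 := hqV p hpV
  have hpyth : ‖p‖ ^ 2 + ‖q‖ ^ 2 = 1 := by
    have := norm_add_sq_real p q
    rw [← hw1, hQ.1 w (hCQ hw), hpq] at this
    linarith
  set c := ‖q‖⁻¹ • q with hc
  have hqc : q = ‖q‖ • c := by rw [hc, smul_smul, mul_inv_cancel₀ hq0.ne', one_smul]
  have hcV : c ∈ Vᗮ := Submodule.smul_mem _ _ hqV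
  have hcV' : ∀ x ∈ V, inner ℝ c x = 0 := fun x hx => by rw [real_inner_comm]; exact hcV x hx
  have hc1 : ‖c‖ = 1 := by rw [hc, norm_smul, norm_inv, norm_norm, inv_mul_cancel₀ hq0.ne']
  have hwQ := hCQ hw
  set η := 2 * ‖p‖ * ‖q‖ with hη
  have hη0 : 0 < η := by positivity
  have key : ∀ t, |t| ≤ η → ∀ p' ∈ V, ‖p'‖ ^ 2 = 1 - t ^ 2 → p' + t • c ∈ Q := by
    intro t ht p' hp' hn
    set r := -(t / η) with hr
    have hr1 : r ^ 2 ≤ 1 := by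
      rw [hr, neg_sq, sq_le_one_iff_abs_le_one, abs_div, abs_of_pos hη0, div_le_one hη0]; exact ht
    have hrη : t = -(η * r) := by rw [hr]; field_simp
    set m := r • e₁ + √(1 - r ^ 2) • e₂ with hm
    have hs := Real.sq_sqrt (show 0 ≤ 1 - r ^ 2 by linarith)
    have hmV : m ∈ V := V.add_mem (V.smul_mem _ h1V) (V.smul_mem _ h2V)
    have hm2 : inner ℝ m m = 1 := by
      simp only [hm, inner_add_left, inner_add_right, inner_smul_left, inner_smul_right, n12, n21,
        real_inner_self_eq_norm_sq, n1, n2]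
      simp only [conj_trivial]
      nlinarith
    have hm1 : ‖m‖ = 1 := by
      rw [real_inner_self_eq_norm_sq] at hm2
      exact (pow_eq_one_iff_of_nonneg (norm_nonneg _) two_ne_zero).1 hm2
    have hme : inner ℝ m e₁ = r := by
      simp [hm, inner_add_left, inner_smul_left, n21, n1]
    have hx : ‖p‖ • m + q ∈ Q := by
      refine hQ.move hV hqV hpV (V.smul_mem _ hmV) ?_ (hw1 ▸ hwQ)
      rw [norm_smul, hm1, norm_norm, mul_one]
    have hz := hQ.2 _ hx e₁ (hV e₁ h1V n1)
    have hin : inner ℝ (‖p‖ • m + q) e₁ = ‖p‖ * r := by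
      rw [inner_add_left, inner_smul_left, hme, hqc, inner_smul_left, hcV' _ h1V]; simp
    rw [hin] at hz
    have hz' : (e₁ - (2 * (‖p‖ * r) * ‖p‖) • m) + t • c ∈ Q := by
      convert hz using 1
      rw [hrη, hη]
      have hq2 : (2 * (‖p‖ * r)) • q = (2 * (‖p‖ * r) * ‖q‖) • c := by rw [mul_smul _ ‖q‖, ← hqc]
      rw [smul_add _ _ q, hq2]
      module
    refine hQ.move hV (Submodule.smul_mem _ _ hcV) (V.sub_mem h1V (V.smul_mem _ hmV)) hp' ?_ hz'
    rw [← sq_eq_sq₀ (norm_nonneg _) (norm_nonneg _), hn, ← real_inner_self_eq_norm_sq, hrη, hη]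
    simp only [inner_sub_left, inner_sub_right, inner_smul_left, inner_smul_right, hm2, hme,
      real_inner_self_eq_norm_sq, n1, conj_trivial]
    rw [real_inner_comm, hme]
    have : ‖q‖ ^ 2 = 1 - ‖p‖ ^ 2 := by linarith
    linear_combination (4 * ‖p‖ ^ 2 * r ^ 2) * this
  refine ⟨V ⊔ ℝ ∙ c, ?_, ?_⟩
  · refine lt_of_le_of_ne le_sup_left fun h => ?_
    have hcc : c ∈ V := by
      rw [h]; exact Submodule.mem_sup_right (Submodule.mem_span_singleton_self c)
    have := hcV' c hcc
    rw [real_inner_self_eq_norm_sq, hc1] at this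
    norm_num at this
  · intro x hx hx1
    obtain ⟨v, hv, y, hy, rfl⟩ := Submodule.mem_sup.1 hx
    obtain ⟨a, rfl⟩ := Submodule.mem_span_singleton.1 hy
    have hva : ‖v‖ ^ 2 + a ^ 2 = 1 := by
      have := norm_add_sq_real v (a • c)
      rw [hx1, inner_smul_right, hcV v hv, norm_smul, hc1] at this
      simp at this
      linarith
    obtain ⟨m, hmV, hm1, hvm⟩ : ∃ m ∈ V, ‖m‖ = 1 ∧ v = ‖v‖ • m := by
      by_cases h0 : v = 0
      · exact ⟨e₁, h1V, n1, by simp [h0]⟩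
      · have : ‖v‖ ≠ 0 := norm_ne_zero_iff.2 h0
        refine ⟨‖v‖⁻¹ • v, V.smul_mem _ hv, ?_, ?_⟩
        · rw [norm_smul, norm_inv, norm_norm, inv_mul_cancel₀ this]
        · rw [smul_smul, mul_inv_cancel₀ this, one_smul]
    have := hQ.circle hm1 hc1 (hcV m hmV) hη0 (fun t ht hct => by
      refine key _ ht _ (V.smul_mem _ hmV) ?_
      rw [norm_smul, hm1, mul_one, Real.norm_eq_abs, sq_abs, Real.cos_sq']) (Real.arcsin a)
    rw [Real.cos_arcsin, Real.sin_arcsin (by nlinarith [sq_nonneg ‖v‖]) (by nlinarith [sq_nonneg ‖v‖]),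
      show 1 - a ^ 2 = ‖v‖ ^ 2 by linarith, Real.sqrt_sq (norm_nonneg _), ← hvm] at this
    exact this

theorem step_up [FiniteDimensional ℝ E] {Q : Set E} (hQ : ReflClosed Q) {C : Set E}
    (hC : IsPreconnected C) (hCQ : C ⊆ Q) (hsp : Submodule.span ℝ C = ⊤)
    {V : Submodule ℝ E} (hV2 : 2 ≤ finrank ℝ V) (hV : ∀ x ∈ V, ‖x‖ = 1 → x ∈ Q) :
    ∀ x : E, ‖x‖ = 1 → x ∈ Q := by
  induction h : finrank ℝ E - finrank ℝ V using Nat.strong_induction_on generalizing V with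
  | _ k ih =>
    by_cases hVt : V = ⊤
    · intro x hx
      exact hV x (hVt ▸ Submodule.mem_top) hx
    · obtain ⟨V', hlt, hV'⟩ := step_one hQ hC hCQ hsp hV2 hV hVt
      have h1 := Submodule.finrank_lt_finrank_of_lt hlt
      have h2 := Submodule.finrank_le V'
      exact ih (finrank ℝ E - finrank ℝ V') (by omega) (by omega) hV' rfl
end StepUp
end ReflGen

/-! ### Reflection matrices and Euclidean space -/

namespace ReflGen
open Module Topology
variable {n : ℕ}

theorem reflMat_mulVec (u y : Fin n → ℝ) : reflMat u *ᵥ y = y - (2 * (u ⬝ᵥ y)) • u := by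
  rw [reflMat, sub_mulVec, one_mulVec, smul_mulVec, vecMulVec_mulVec]
  ext i
  simp; ring

theorem reflMat_transpose (u : Fin n → ℝ) : (reflMat u)ᵀ = reflMat u := by
  simp [reflMat, transpose_sub, transpose_smul, transpose_vecMulVec]

theorem reflMat_mul_self {u : Fin n → ℝ} (hu : u ⬝ᵥ u = 1) : reflMat u * reflMat u = 1 := by
  simp only [reflMat, Matrix.sub_mul, Matrix.mul_sub, Matrix.one_mul, Matrix.mul_one, smul_mul_assoc,
    mul_smul_comm, vmv_mul, hu, one_smul]
  module

theorem mul_reflMat_mul {g : Matrix (Fin n) (Fin n) ℝ} (hg : g * gᵀ = 1) (u : Fin n → ℝ) :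
    g * reflMat u * gᵀ = reflMat (g *ᵥ u) := by
  simp only [reflMat, Matrix.mul_sub, Matrix.sub_mul, Matrix.mul_one, hg, mul_smul_comm, smul_mul_assoc]
  rw [mul_vecMulVec, vecMulVec_mul, vecMul_transpose]

theorem mulVec_dot {g : Matrix (Fin n) (Fin n) ℝ} (hg : gᵀ * g = 1) (x y : Fin n → ℝ) :
    (g *ᵥ x) ⬝ᵥ (g *ᵥ y) = x ⬝ᵥ y := by
  rw [dotProduct_mulVec, vecMul_mulVec, hg, vecMul_one]

/-- `ReflClosed` for vectors in `Fin n → ℝ` with the dot product. -/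
def RC (R : Set (Fin n → ℝ)) : Prop :=
  (∀ x ∈ R, x ⬝ᵥ x = 1) ∧ ∀ x ∈ R, ∀ y ∈ R, y - (2 * (x ⬝ᵥ y)) • x ∈ R

/-- A set of vectors in `Fin n → ℝ`, viewed in Euclidean space. -/
abbrev toE (R : Set (Fin n → ℝ)) : Set (EuclideanSpace ℝ (Fin n)) := {x | x.ofLp ∈ R}

theorem inner_eq (x y : EuclideanSpace ℝ (Fin n)) : inner ℝ x y = x.ofLp ⬝ᵥ y.ofLp := by
  rw [EuclideanSpace.inner_eq_star_dotProduct, dotProduct_comm]; rfl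

theorem norm_eq_one (x : EuclideanSpace ℝ (Fin n)) : ‖x‖ = 1 ↔ x.ofLp ⬝ᵥ x.ofLp = 1 := by
  rw [← inner_eq, real_inner_self_eq_norm_sq, pow_eq_one_iff_of_nonneg (norm_nonneg _) two_ne_zero]

theorem RC.toE {R : Set (Fin n → ℝ)} (h : RC R) : ReflClosed (toE R) := by
  refine ⟨fun x hx => (norm_eq_one x).2 (h.1 _ hx), fun x hx y hy => ?_⟩
  have := h.2 _ hx _ hy
  rw [inner_eq]
  exact this

theorem exists_angle {a b : ℝ} (h : a ^ 2 + b ^ 2 = 1) : ∃ t, Real.cos t = a ∧ Real.sin t = b := by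
  have hn : ‖(⟨a, b⟩ : ℂ)‖ = 1 := by
    rw [Complex.norm_def, Complex.normSq_mk, ← sq, ← sq, h, Real.sqrt_one]
  have h0 : (⟨a, b⟩ : ℂ) ≠ 0 := by
    intro h; rw [h, norm_zero] at hn; norm_num at hn
  refine ⟨Complex.arg ⟨a, b⟩, ?_, ?_⟩
  · rw [Complex.cos_arg h0, hn]; simp
  · rw [Complex.sin_arg, hn]; simp

theorem step_up_circle {Q : Set (EuclideanSpace ℝ (Fin n))} (hQ : ReflClosed Q)
    {C : Set (EuclideanSpace ℝ (Fin n))}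
    (hC : IsPreconnected C) (hCQ : C ⊆ Q) (hsp : Submodule.span ℝ C = ⊤)
    {u v : EuclideanSpace ℝ (Fin n)} (hu : ‖u‖ = 1) (hv : ‖v‖ = 1) (huv : inner ℝ u v = 0)
    (hcirc : ∀ t, Real.cos t • u + Real.sin t • v ∈ Q) :
    ∀ x : EuclideanSpace ℝ (Fin n), ‖x‖ = 1 → x ∈ Q := by
  have hli : LinearIndependent ℝ ![u, v] := by
    apply Orthonormal.linearIndependent (𝕜 := ℝ)
    rw [orthonormal_iff_ite]
    intro i j
    fin_cases i <;> fin_cases j <;> simp [hu, hv, huv, real_inner_comm u v]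
  refine step_up hQ hC hCQ hsp (V := Submodule.span ℝ (Set.range ![u, v])) ?_ ?_
  · rw [finrank_span_eq_card hli]; simp
  · intro x hx hx1
    rw [show Set.range ![u, v] = {u, v} by simp [Set.pair_comm], Submodule.mem_span_pair] at hx
    obtain ⟨a, b, rfl⟩ := hx
    have : a ^ 2 + b ^ 2 = 1 := by
      have h := norm_add_sq_real (a • u) (b • v)
      rw [hx1, inner_smul_left, inner_smul_right, huv, norm_smul, norm_smul, hu, hv] at h
      simp at h
      linarith
    obtain ⟨t, rfl, rfl⟩ := exists_angle this
    exact hcirc t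

/-- The Cartan–Dieudonné theorem, in matrix form. -/
theorem mem_of_all_refl {G : Submonoid (Matrix (Fin n) (Fin n) ℝ)}
    (h : ∀ u : Fin n → ℝ, u ⬝ᵥ u = 1 → reflMat u ∈ G) {M : Matrix (Fin n) (Fin n) ℝ}
    (hM : Mᵀ * M = 1) : M ∈ G := by
  let L : EuclideanSpace ℝ (Fin n) →ₗᵢ[ℝ] EuclideanSpace ℝ (Fin n) :=
    { toLinearMap := Matrix.toEuclideanLin M
      norm_map' := by
        intro x
        rw [← sq_eq_sq₀ (norm_nonneg _) (norm_nonneg _), ← real_inner_self_eq_norm_sq,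
          ← real_inner_self_eq_norm_sq, inner_eq, inner_eq]
        exact mulVec_dot hM _ _ }
  obtain ⟨l, -, hl⟩ := (L.toLinearIsometryEquiv rfl).reflections_generate_dim
  have key : ∀ l : List (EuclideanSpace ℝ (Fin n)), ∃ g ∈ G, ∀ x : EuclideanSpace ℝ (Fin n),
      ((l.map fun v => (ℝ ∙ v)ᗮ.reflection).prod x).ofLp = g *ᵥ x.ofLp := by
    intro l
    induction l with
    | nil => exact ⟨1, G.one_mem, fun x => by simp⟩
    | cons v l ih =>
      obtain ⟨g, hg, hgx⟩ := ih
      by_cases hv : v = 0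
      · refine ⟨g, hg, fun x => ?_⟩
        rw [List.map_cons, List.prod_cons, ← hgx, hv]
        change (((ℝ ∙ (0 : EuclideanSpace ℝ (Fin n)))ᗮ).reflection _).ofLp = _
        rw [Submodule.reflection_mem_subspace_eq_self]
        · simp
        · rw [Submodule.mem_orthogonal_singleton_iff_inner_left, inner_zero_right]
      · refine ⟨reflMat (‖v‖⁻¹ • v).ofLp * g, G.mul_mem (h _ ?_) hg, fun x => ?_⟩
        · rw [← norm_eq_one, norm_smul, norm_inv, norm_norm, inv_mul_cancel₀ (norm_ne_zero_iff.2 hv)]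
        · rw [List.map_cons, List.prod_cons, ← mulVec_mulVec, ← hgx, reflMat_mulVec]
          change (((ℝ ∙ v)ᗮ).reflection _).ofLp = _
          rw [Submodule.reflection_orthogonal_apply, Submodule.reflection_singleton_apply, ← inner_eq,
            inner_smul_left]
          ext i
          simp
          ring
  obtain ⟨g, hg, hgx⟩ := key l
  have : M = g := by
    apply Matrix.ext_of_mulVec_single
    intro i
    have := hgx (WithLp.toLp 2 (Pi.single i 1))
    rw [← hl] at this
    exact this
  rw [this]; exact hg

end ReflGen

/-! ### The orbit of the curve -/

namespace ReflGen
variable {n : ℕ}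

theorem dot_self_nonneg (x : Fin n → ℝ) : 0 ≤ x ⬝ᵥ x :=
  Finset.sum_nonneg fun i _ => mul_self_nonneg (x i)

theorem dot_combo {u v : Fin n → ℝ} (h : Ortho u v) (a b : ℝ) :
    (a • u + b • v) ⬝ᵥ (a • u + b • v) = a ^ 2 + b ^ 2 := by
  obtain ⟨h1, h2, h3⟩ := h
  have h4 : v ⬝ᵥ u = 0 := by rw [dotProduct_comm]; exact h3
  simp [h1, h2, h3, h4, sq]

/-- Gram–Schmidt for two unit vectors at angle `θ`. -/
theorem exists_second {x y : Fin n → ℝ} (hx : x ⬝ᵥ x = 1) (hy : y ⬝ᵥ y = 1) {θ : ℝ}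
    (h : x ⬝ᵥ y = Real.cos θ) (hs : Real.sin θ ≠ 0) :
    ∃ v, Ortho x v ∧ y = Real.cos θ • x + Real.sin θ • v := by
  have h' : y ⬝ᵥ x = Real.cos θ := by rw [dotProduct_comm]; exact h
  refine ⟨(Real.sin θ)⁻¹ • (y - Real.cos θ • x), ⟨hx, ?_, ?_⟩, ?_⟩
  · simp only [smul_dotProduct, dotProduct_smul, sub_dotProduct, dotProduct_sub, hx, hy, h, h',
      smul_eq_mul]
    field_simp
    have := Real.sin_sq_add_cos_sq θ
    linarith
  · simp [hx, h]
  · rw [smul_inv_smul₀ hs]; module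

theorem RC.neg_mem {R : Set (Fin n → ℝ)} (hR : RC R) {x : Fin n → ℝ} (hx : x ∈ R) : -x ∈ R := by
  have h := hR.2 x hx x hx
  rw [hR.1 x hx] at h
  convert h using 1
  module

theorem Ortho.toE {u v : Fin n → ℝ} (h : Ortho u v) :
    ‖WithLp.toLp 2 u‖ = 1 ∧ ‖WithLp.toLp 2 v‖ = 1 ∧
      inner ℝ (WithLp.toLp 2 u) (WithLp.toLp 2 v) = 0 :=
  ⟨(norm_eq_one _).2 h.1, (norm_eq_one _).2 h.2.1, (inner_eq _ _).trans h.2.2⟩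

theorem RC.angle {R : Set (Fin n → ℝ)} (hR : RC R) {u v : Fin n → ℝ} (h : Ortho u v) {s t : ℝ}
    (hs : Real.cos s • u + Real.sin s • v ∈ R) (ht : Real.cos t • u + Real.sin t • v ∈ R) :
    Real.cos (2 * s - t) • u + Real.sin (2 * s - t) • v ∈ R :=
  hR.toE.angle h.toE.1 h.toE.2.1 h.toE.2.2 (s := s) (t := t) hs ht

theorem RC.circle {R : Set (Fin n → ℝ)} (hR : RC R) {u v : Fin n → ℝ} (h : Ortho u v)
    {η : ℝ} (hη : 0 < η)
    (hc : ∀ t, |Real.sin t| ≤ η → 0 ≤ Real.cos t → Real.cos t • u + Real.sin t • v ∈ R) (t : ℝ) :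
    Real.cos t • u + Real.sin t • v ∈ R :=
  hR.toE.circle h.toE.1 h.toE.2.1 h.toE.2.2 hη hc t

section Orbit
variable {A : Type*} {μ : A → (Fin n → ℝ)}

/-- The monoid generated by the reflections in the vectors `μ a`. It is closed under transposition,
hence a group. -/
def GM (μ : A → (Fin n → ℝ)) : Submonoid (Matrix (Fin n) (Fin n) ℝ) :=
  Submonoid.closure (Set.range fun a => reflMat (μ a))

/-- The orbit of the curve `μ` under the group it generates. -/
def Orb (μ : A → (Fin n → ℝ)) : Set (Fin n → ℝ) := {y | ∃ g ∈ GM μ, ∃ a, y = g *ᵥ μ a}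

/-- The unit vectors whose reflection lies in `G`. -/
def RS (G : Submonoid (Matrix (Fin n) (Fin n) ℝ)) : Set (Fin n → ℝ) :=
  {y | y ⬝ᵥ y = 1 ∧ reflMat y ∈ G}

theorem refl_mem_GM (a : A) : reflMat (μ a) ∈ GM μ := Submonoid.subset_closure ⟨a, rfl⟩

theorem GM_orth (hunit : ∀ a, μ a ⬝ᵥ μ a = 1) {g : Matrix (Fin n) (Fin n) ℝ} (hg : g ∈ GM μ) :
    g * gᵀ = 1 := by
  induction hg using Submonoid.closure_induction with
  | mem x hx =>
    obtain ⟨a, rfl⟩ := hx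
    simp only [reflMat_transpose, reflMat_mul_self (hunit a)]
  | one => simp
  | mul x y _ _ hx hy =>
    rw [transpose_mul, Matrix.mul_assoc, ← Matrix.mul_assoc y, hy, Matrix.one_mul, hx]

theorem GM_T {g : Matrix (Fin n) (Fin n) ℝ} (hg : g ∈ GM μ) : gᵀ ∈ GM μ := by
  induction hg using Submonoid.closure_induction with
  | mem x hx =>
    obtain ⟨a, rfl⟩ := hx
    simp only [reflMat_transpose, refl_mem_GM]
  | one => simp
  | mul x y _ _ hx hy =>
    rw [transpose_mul]; exact (GM μ).mul_mem hy hx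

theorem RS_RC (G : Submonoid (Matrix (Fin n) (Fin n) ℝ)) : RC (RS G) := by
  refine ⟨fun x hx => hx.1, fun x hx y hy => ?_⟩
  have hxx := reflMat_mul_self hx.1
  rw [← reflMat_mulVec]
  refine ⟨?_, ?_⟩
  · rw [mulVec_dot (by rw [reflMat_transpose, hxx])]; exact hy.1
  · rw [← mul_reflMat_mul (by rw [reflMat_transpose, hxx]), reflMat_transpose]
    exact G.mul_mem (G.mul_mem hx.2 hy.2) hx.2

theorem Orb_sub_RS (hunit : ∀ a, μ a ⬝ᵥ μ a = 1) : Orb μ ⊆ RS (GM μ) := by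
  rintro _ ⟨g, hg, a, rfl⟩
  refine ⟨?_, ?_⟩
  · rw [mulVec_dot (mul_eq_one_comm.1 (GM_orth hunit hg)), hunit]
  · rw [← mul_reflMat_mul (GM_orth hunit hg)]
    exact (GM μ).mul_mem ((GM μ).mul_mem hg (refl_mem_GM a)) (GM_T hg)

theorem mem_Orb (a : A) : μ a ∈ Orb μ := ⟨1, (GM μ).one_mem, a, by simp⟩

theorem Orb_RC (hunit : ∀ a, μ a ⬝ᵥ μ a = 1) : RC (Orb μ) := by
  refine ⟨fun x hx => (Orb_sub_RS hunit hx).1, fun x hx y hy => ?_⟩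
  obtain ⟨g, hg, a, rfl⟩ := hy
  rw [← reflMat_mulVec, mulVec_mulVec]
  exact ⟨_, (GM μ).mul_mem (Orb_sub_RS hunit hx).2 hg, a, rfl⟩

end Orbit

section
variable {A : Type*} [TopologicalSpace A] [ConnectedSpace A] {μ : A → (Fin n → ℝ)}

/-- A reflection-closed set containing the curve `μ` and one great circle contains all unit vectors. -/
theorem RC.all {R : Set (Fin n → ℝ)} (hR : RC R) (hcont : Continuous μ)
    (hspan : Submodule.span ℝ (Set.range μ) = ⊤) (hμ : ∀ a, μ a ∈ R) {u v : Fin n → ℝ}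
    (h : Ortho u v) (hc : ∀ t, Real.cos t • u + Real.sin t • v ∈ R) :
    ∀ x : Fin n → ℝ, x ⬝ᵥ x = 1 → x ∈ R := by
  intro x hx
  refine step_up_circle hR.toE (C := Set.range fun a => WithLp.toLp 2 (μ a)) ?_ ?_ ?_
    h.toE.1 h.toE.2.1 h.toE.2.2 hc (WithLp.toLp 2 x) ((norm_eq_one _).2 hx)
  · exact isPreconnected_range ((PiLp.continuous_toLp 2 _).comp hcont)
  · rintro _ ⟨a, rfl⟩; exact hμ a
  · have := congrArg (Submodule.map (WithLp.linearEquiv 2 ℝ (Fin n → ℝ)).symm.toLinearMap) hspan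
    rw [Submodule.map_span, ← Set.range_comp, Submodule.map_top, LinearEquiv.range] at this
    exact this

/-- An even continuous function has the intermediate value property on the orbit, even though the
orbit need not be connected: the translates `g μ` and `g r_a μ` of the curve pass through opposite
points at the parameter `a`. -/
theorem Orb_ivt (hcont : Continuous μ) (hunit : ∀ a, μ a ⬝ᵥ μ a = 1) {φ : (Fin n → ℝ) → ℝ}
    (hφ : Continuous φ) (heven : ∀ y, φ (-y) = φ y) {t : ℝ}
    (h1 : ∃ y ∈ Orb μ, φ y ≤ t) (h2 : ∃ y ∈ Orb μ, t ≤ φ y) : ∃ y ∈ Orb μ, φ y = t := by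
  by_contra! hne
  obtain ⟨a₀⟩ : Nonempty A := inferInstance
  have hconst : ∀ g ∈ GM μ, ∀ b c, φ (g *ᵥ μ b) < t → φ (g *ᵥ μ c) < t := by
    intro g hg b c hb
    by_contra! hc
    have hf : Continuous fun a => φ (g *ᵥ μ a) :=
      hφ.comp (continuous_const.matrix_mulVec hcont)
    obtain ⟨d, hd⟩ := mem_range_of_exists_le_of_exists_ge hf ⟨b, hb.le⟩ ⟨c, hc⟩
    exact hne _ ⟨g, hg, d, rfl⟩ hd
  have key : ∀ g ∈ GM μ, ∀ b, φ (g *ᵥ μ b) < t ↔ φ (μ a₀) < t := by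
    intro g hg
    induction hg using Submonoid.closure_induction_right with
    | one =>
      intro b
      have h := hconst 1 (GM μ).one_mem
      simp only [one_mulVec] at h ⊢
      exact ⟨h _ _, h _ _⟩
    | mul_right g hg r hr ih =>
      obtain ⟨a, rfl⟩ := hr
      intro b
      have h := hconst _ ((GM μ).mul_mem hg (refl_mem_GM a))
      have e : φ ((g * reflMat (μ a)) *ᵥ μ a) = φ (g *ᵥ μ a) := by
        rw [← mulVec_mulVec, reflMat_mulVec, hunit, ← heven (g *ᵥ μ a), ← mulVec_neg]
        congr 2
        module
      rw [← ih a, ← e]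
      exact ⟨h _ _, h _ _⟩
  obtain ⟨_, ⟨g, hg, a, rfl⟩, h1⟩ := h1
  obtain ⟨_, ⟨g', hg', a', rfl⟩, h2⟩ := h2
  have i1 := (key g hg a).1 (lt_of_le_of_ne h1 (hne _ ⟨g, hg, a, rfl⟩))
  have i2 := (key g' hg' a').2 i1
  linarith

theorem RC.closure {R : Set (Fin n → ℝ)} (hR : RC R) : RC (closure R) := by
  refine ⟨?_, ?_⟩
  · have hcl : IsClosed {x : Fin n → ℝ | x ⬝ᵥ x = 1} :=
      isClosed_eq (continuous_id.dotProduct continuous_id) continuous_const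
    exact closure_minimal hR.1 hcl
  · intro x hx y hy
    have hf : Continuous (Function.uncurry fun x y : Fin n → ℝ => y - (2 * (x ⬝ᵥ y)) • x) := by
      unfold Function.uncurry
      exact continuous_snd.sub ((continuous_const.mul
        (continuous_fst.dotProduct continuous_snd)).smul continuous_fst)
    exact map_mem_closure₂ (f := fun x y : Fin n → ℝ => y - (2 * (x ⬝ᵥ y)) • x) hf hx hy hR.2

theorem exists_ne (hn : 2 ≤ n) (hspan : Submodule.span ℝ (Set.range μ) = ⊤) (a : A) :
    ∃ b, μ b ≠ μ a := by
  by_contra! h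
  have hr : Set.range μ = {μ a} := by
    ext x; constructor
    · rintro ⟨b, rfl⟩; exact h b
    · rintro rfl; exact ⟨a, rfl⟩
  rw [hr] at hspan
  have := finrank_span_le_card (R := ℝ) ({μ a} : Set (Fin n → ℝ))
  rw [hspan, finrank_top] at this
  simp at this
  omega

theorem dot_lt_one {x y : Fin n → ℝ} (hx : x ⬝ᵥ x = 1) (hy : y ⬝ᵥ y = 1) (h : y ≠ x) :
    x ⬝ᵥ y < 1 := by
  have : 0 < (y - x) ⬝ᵥ (y - x) := by
    refine lt_of_le_of_ne (dot_self_nonneg _) (Ne.symm ?_)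
    rw [Ne, dotProduct_self_eq_zero, sub_eq_zero]; exact h
  have h' : y ⬝ᵥ x = x ⬝ᵥ y := dotProduct_comm _ _
  simp only [sub_dotProduct, dotProduct_sub, hx, hy, h'] at this
  linarith

/-- Two points of the curve span an angle `θ` that is an irrational multiple of `π`. -/
theorem exists_irr (hn : 2 ≤ n) (hcont : Continuous μ) (hunit : ∀ a, μ a ⬝ᵥ μ a = 1)
    (hspan : Submodule.span ℝ (Set.range μ) = ⊤) :
    ∃ a b v θ, Irrational (θ / Real.pi) ∧ Ortho (μ a) v ∧
      μ b = Real.cos θ • μ a + Real.sin θ • v := by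
  obtain ⟨a⟩ : Nonempty A := inferInstance
  obtain ⟨b, hb⟩ := exists_ne hn hspan a
  have hf : Continuous fun c => Real.arccos (μ a ⬝ᵥ μ c) :=
    Real.continuous_arccos.comp (continuous_const.dotProduct hcont)
  have hpos : 0 < Real.arccos (μ a ⬝ᵥ μ b) :=
    Real.arccos_pos.2 (dot_lt_one (hunit a) (hunit b) hb)
  obtain ⟨q, hq, h0, h1⟩ := exists_irrational_btwn (div_pos hpos Real.pi_pos)
  rw [lt_div_iff₀ Real.pi_pos] at h1
  have hθ : 0 < q * Real.pi := mul_pos h0 Real.pi_pos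
  have hle := Real.arccos_le_pi (μ a ⬝ᵥ μ b)
  obtain ⟨c, hc⟩ := mem_range_of_exists_le_of_exists_ge hf
    (c := q * Real.pi) ⟨a, by rw [hunit, Real.arccos_one]; exact hθ.le⟩ ⟨b, h1.le⟩
  have hdot : μ a ⬝ᵥ μ c = Real.cos (q * Real.pi) := by
    have hb1 : μ a ⬝ᵥ μ c ≤ 1 := by
      by_cases h : μ c = μ a
      · rw [h, hunit]
      · exact (dot_lt_one (hunit a) (hunit c) h).le
    have hb2 : -1 ≤ μ a ⬝ᵥ μ c := by
      have hm : 0 ≤ (μ a + μ c) ⬝ᵥ (μ a + μ c) := dot_self_nonneg _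
      have h' : μ c ⬝ᵥ μ a = μ a ⬝ᵥ μ c := dotProduct_comm _ _
      simp only [add_dotProduct, dotProduct_add, hunit, h'] at hm
      linarith
    rw [← hc, Real.cos_arccos hb2 hb1]
  obtain ⟨v, hv, hcv⟩ := exists_second (hunit a) (hunit c) hdot
    (Real.sin_pos_of_pos_of_lt_pi hθ (by linarith)).ne'
  exact ⟨a, c, v, _, by rwa [mul_div_cancel_right₀ _ Real.pi_ne_zero], hv, hcv⟩

/-- The orbit is dense in the sphere: its closure contains the great circle through two points of the
curve whose angle is an irrational multiple of `π`, hence everything. -/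
theorem Orb_dense (hn : 2 ≤ n) (hcont : Continuous μ) (hunit : ∀ a, μ a ⬝ᵥ μ a = 1)
    (hspan : Submodule.span ℝ (Set.range μ) = ⊤) {x : Fin n → ℝ} (hx : x ⬝ᵥ x = 1) :
    x ∈ closure (Orb μ) := by
  have hR := (Orb_RC hunit).closure
  obtain ⟨a, b, v, θ, hθ, hv, hb⟩ := exists_irr hn hcont hunit hspan
  refine hR.all hcont hspan (fun a => subset_closure (mem_Orb a)) hv ?_ x hx
  set T : Set ℝ := {t | Real.cos t • μ a + Real.sin t • v ∈ closure (Orb μ)} with hT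
  have hTcl : IsClosed T := isClosed_closure.preimage (by fun_prop)
  have h0 : (0 : ℝ) ∈ T := by
    simp only [hT, Set.mem_ofPred_eq, Real.cos_zero, Real.sin_zero, one_smul, zero_smul, add_zero]
    exact subset_closure (mem_Orb a)
  have hθT : θ ∈ T := by
    simp only [hT, Set.mem_ofPred_eq, ← hb]
    exact subset_closure (mem_Orb b)
  have hang : ∀ s ∈ T, ∀ t ∈ T, 2 * s - t ∈ T := fun s hs t ht => hR.angle hv hs ht
  have hπ : ∀ t ∈ T, t + Real.pi ∈ T := by
    intro t ht
    simp only [hT, Set.mem_ofPred_eq, Real.cos_add_pi, Real.sin_add_pi]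
    have := hR.neg_mem ht
    convert this using 1
    module
  have hneg : ∀ t ∈ T, -t ∈ T := fun t ht => by simpa using hang 0 h0 t ht
  have htr : ∀ t ∈ AddSubgroup.closure {2 * θ, Real.pi}, ∀ s ∈ T, s + t ∈ T := by
    intro t ht
    induction ht using AddSubgroup.closure_induction with
    | mem t ht =>
      rcases ht with rfl | rfl
      · intro s hs
        have := hang θ hθT _ (hneg s hs)
        rwa [sub_neg_eq_add, add_comm] at this
      · exact hπ
    | zero => simp
    | add t t' _ _ h h' =>
      intro s hs
      rw [← add_assoc]; exact h' _ (h _ hs)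
    | neg t _ h =>
      intro s hs
      have := hneg _ (h _ (hneg s hs))
      rwa [neg_add, neg_neg] at this
  have hd : Dense (AddSubgroup.closure {2 * θ, Real.pi} : Set ℝ) := by
    rw [dense_addSubgroupClosure_pair_iff, mul_div_assoc]
    exact_mod_cast hθ.natCast_mul two_ne_zero
  have hsub : (AddSubgroup.closure {2 * θ, Real.pi} : Set ℝ) ⊆ T := fun t ht => by
    simpa using htr t ht 0 h0
  intro t
  exact closure_minimal hsub hTcl (hd t)
end
end ReflGen

/-! ### All reflections belong to the group -/

namespace ReflGen
variable {n : ℕ}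

theorem exists_perp (hn : 3 ≤ n) (u v : Fin n → ℝ) :
    ∃ w : Fin n → ℝ, w ⬝ᵥ w = 1 ∧ u ⬝ᵥ w = 0 ∧ v ⬝ᵥ w = 0 := by
  let K : Submodule ℝ (EuclideanSpace ℝ (Fin n)) :=
    Submodule.span ℝ (({WithLp.toLp 2 u, WithLp.toLp 2 v} : Finset _) : Set _)
  have hK : Module.finrank ℝ K ≤ 2 := (finrank_span_finset_le_card _).trans Finset.card_le_two
  have hsum := K.finrank_add_finrank_orthogonal
  rw [finrank_euclideanSpace_fin] at hsum
  have hne : Kᗮ ≠ ⊥ := by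
    intro h
    rw [h, finrank_bot] at hsum
    omega
  obtain ⟨w, hw, hw0⟩ := Submodule.exists_mem_ne_zero_of_ne_bot hne
  rw [Submodule.mem_orthogonal] at hw
  have hu := hw (WithLp.toLp 2 u) (Submodule.subset_span (by simp))
  have hv := hw (WithLp.toLp 2 v) (Submodule.subset_span (by simp))
  rw [inner_eq] at hu hv
  refine ⟨(‖w‖⁻¹ • w).ofLp, ?_, ?_, ?_⟩
  · rw [← norm_eq_one, norm_smul, norm_inv, norm_norm, inv_mul_cancel₀ (norm_ne_zero_iff.2 hw0)]
  · rw [WithLp.ofLp_smul, dotProduct_smul, hu, smul_zero]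
  · rw [WithLp.ofLp_smul, dotProduct_smul, hv, smul_zero]

theorem rot_mulVec {u v : Fin n → ℝ} (h : Ortho u v) (t : ℝ) :
    rot u v t *ᵥ u = Real.cos (2 * t) • u + Real.sin (2 * t) • v := by
  obtain ⟨h1, h2, h3⟩ := h
  have h4 : v ⬝ᵥ u = 0 := by rw [dotProduct_comm]; exact h3
  rw [rot, add_mulVec, sub_mulVec, smul_mulVec, smul_mulVec, add_mulVec, sub_mulVec, one_mulVec]
  simp only [vecMulVec_mulVec, h1, h4]
  rw [Real.cos_two_mul, Real.sin_two_mul, Real.cos_sq']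
  ext i
  simp
  ring

theorem refl_mul_refl {u v : Fin n → ℝ} (h : Ortho u v) (t : ℝ) :
    reflMat (Real.cos t • u + Real.sin t • v) * reflMat u = rot u v t := by
  obtain ⟨h1, h2, h3⟩ := h
  have h4 : v ⬝ᵥ u = 0 := by rw [dotProduct_comm]; exact h3
  unfold reflMat rot
  simp only [Matrix.sub_mul, Matrix.mul_sub, Matrix.one_mul, Matrix.mul_one,
    smul_mul_assoc, mul_smul_comm, vmv_mul, add_dotProduct, smul_dotProduct, h1, h4]
  ext i j
  have e := Real.cos_sq' t
  simp [vecMulVec_apply]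
  linear_combination (2 * u i * u j) * e

section
variable {A : Type*} [TopologicalSpace A] [ConnectedSpace A] {μ : A → (Fin n → ℝ)}

/-- By density of the orbit, `Orb_ivt` only needs the value `t` to be crossed on the sphere. -/
theorem Orb_ivt' (hn : 2 ≤ n) (hcont : Continuous μ) (hunit : ∀ a, μ a ⬝ᵥ μ a = 1)
    (hspan : Submodule.span ℝ (Set.range μ) = ⊤) {φ : (Fin n → ℝ) → ℝ}
    (hφ : Continuous φ) (heven : ∀ y, φ (-y) = φ y) {t : ℝ} {x y : Fin n → ℝ}
    (hx : x ⬝ᵥ x = 1) (hy : y ⬝ᵥ y = 1) (h1 : φ x < t) (h2 : t < φ y) :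
    ∃ y ∈ Orb μ, φ y = t := by
  refine Orb_ivt hcont hunit hφ heven ?_ ?_
  · obtain ⟨z, hz, hzO⟩ := mem_closure_iff.1 (Orb_dense hn hcont hunit hspan hx) {z | φ z < t}
      (isOpen_lt hφ continuous_const) h1
    exact ⟨z, hzO, le_of_lt hz⟩
  · obtain ⟨z, hz, hzO⟩ := mem_closure_iff.1 (Orb_dense hn hcont hunit hspan hy) {z | t < φ z}
      (isOpen_lt continuous_const hφ) h2
    exact ⟨z, hzO, le_of_lt hz⟩

theorem GM_Dns (hn : 3 ≤ n) (hcont : Continuous μ) (hunit : ∀ a, μ a ⬝ᵥ μ a = 1)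
    (hspan : Submodule.span ℝ (Set.range μ) = ⊤) : Dns (GM μ) := by
  intro u v huv s hs0 hs1
  obtain ⟨w, hw, huw, hvw⟩ := exists_perp hn u v
  have hvu : v ⬝ᵥ u = 0 := by rw [dotProduct_comm]; exact huv.2.2
  obtain ⟨y, hy, hys⟩ := Orb_ivt' (by omega) hcont hunit hspan
    (φ := fun y => (u ⬝ᵥ y) ^ 2 + (v ⬝ᵥ y) ^ 2) (t := s)
    (((continuous_const.dotProduct continuous_id).pow 2).add
      ((continuous_const.dotProduct continuous_id).pow 2))
    (by intro y; simp) hw huv.1 (by simpa [huw, hvw] using hs0)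
    (by simpa [huv.1, hvu] using hs1)
  exact ⟨y, (Orb_sub_RS hunit hy).1, (Orb_sub_RS hunit hy).2, hys⟩

/-- In dimension at least three, the orbit contains a vector at angle `π / 4` from a point of the curve;
all rotations in the plane they span belong to the group, and `RC.all` applies. -/
theorem all_of_three_le (hn : 3 ≤ n) (hcont : Continuous μ) (hunit : ∀ a, μ a ⬝ᵥ μ a = 1)
    (hspan : Submodule.span ℝ (Set.range μ) = ⊤) :
    ∀ x : Fin n → ℝ, x ⬝ᵥ x = 1 → x ∈ RS (GM μ) := by
  obtain ⟨a, -, w, -, -, hw, -⟩ := exists_irr (by omega) hcont hunit hspan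
  -- the square of the cosine of `π / 4` is `1 / 2`
  obtain ⟨y, hy, hya⟩ := Orb_ivt' (by omega) hcont hunit hspan
    (φ := fun y => (μ a ⬝ᵥ y) ^ 2) (t := 1 / 2)
    ((continuous_const.dotProduct continuous_id).pow 2) (by intro y; simp) hw.2.1 (hunit a)
    (by simp [hw.2.2]) (by norm_num [hunit])
  have hT : ∀ g ∈ GM μ, gᵀ ∈ GM μ := fun g hg => GM_T hg
  -- the angle of `y` is `π / 4` or `3 π / 4`, and `-y` is in the orbit too
  obtain ⟨z, hz, hza⟩ : ∃ z ∈ Orb μ, μ a ⬝ᵥ z = Real.cos (Real.pi / 4) := by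
    have h2 : (Real.cos (Real.pi / 4)) ^ 2 = 1 / 2 := by
      rw [Real.cos_pi_div_four, div_pow, Real.sq_sqrt] <;> norm_num
    rcases sq_eq_sq_iff_eq_or_eq_neg.1 (hya.trans h2.symm) with h | h
    · exact ⟨y, hy, h⟩
    · exact ⟨-y, (Orb_RC hunit).neg_mem hy, by rw [dotProduct_neg, h, neg_neg]⟩
  have hzR := Orb_sub_RS hunit hz
  obtain ⟨v, hv, hzv⟩ := exists_second (hunit a) hzR.1 hza
    (by rw [Real.sin_pi_div_four]; positivity)
  have h4 : Real.pi / 4 ∈ HG (GM μ) hT hv := by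
    change rot _ _ _ ∈ GM μ
    rw [← refl_mul_refl hv, ← hzv]
    exact (GM μ).mul_mem hzR.2 (refl_mem_GM a)
  have htop := HG_eq_top hT (GM_Dns hn hcont hunit hspan) hv h4
  refine (RS_RC _).all hcont hspan (fun b => Orb_sub_RS hunit (mem_Orb b)) hv ?_
  intro t
  have hr : rot (μ a) v (t / 2) ∈ GM μ := by
    have : t / 2 ∈ HG (GM μ) hT hv := by rw [htop]; trivial
    exact this
  have := Orb_sub_RS hunit ⟨_, hr, a, rfl⟩
  rwa [rot_mulVec hv, mul_div_cancel₀ _ two_ne_zero] at this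

end

/-- In the plane, the curve itself contains an arc of the circle up to reflection in the line of `μ a`. -/
theorem all_of_two {A : Type*} [TopologicalSpace A] [ConnectedSpace A] {μ : A → (Fin 2 → ℝ)}
    (hcont : Continuous μ) (hunit : ∀ a, μ a ⬝ᵥ μ a = 1)
    (hspan : Submodule.span ℝ (Set.range μ) = ⊤) :
    ∀ x : Fin 2 → ℝ, x ⬝ᵥ x = 1 → x ∈ RS (GM μ) := by
  obtain ⟨a⟩ : Nonempty A := inferInstance
  obtain ⟨b, hb⟩ := exists_ne le_rfl hspan a
  have hlt := dot_lt_one (hunit a) (hunit b) hb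
  have hμ : ∀ c, μ c ∈ RS (GM μ) := fun c => Orb_sub_RS hunit (mem_Orb c)
  have hu := hunit a
  set u := μ a with hua
  have hv : Ortho u ![-u 1, u 0] := by
    simp only [dotProduct, Fin.sum_univ_two] at hu
    refine ⟨by simpa [dotProduct, Fin.sum_univ_two] using hu, ?_, ?_⟩ <;>
      simp [dotProduct, Fin.sum_univ_two] <;> linarith
  have hR := RS_RC (GM μ)
  refine hR.all hcont hspan hμ hv ?_
  have hc1 : max (u ⬝ᵥ μ b) 0 < 1 := max_lt hlt one_pos
  set c := max (u ⬝ᵥ μ b) 0 with hc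
  have hc0 : 0 ≤ c := le_max_right _ _
  refine hR.circle hv (η := √(1 - c ^ 2)) (Real.sqrt_pos.2 (by nlinarith)) ?_
  intro t hs hct
  -- the curve takes every value of `⟨u, ·⟩` between `c` and `1`
  have hcc : c ≤ Real.cos t := by
    have h1 : |Real.sin t| ^ 2 ≤ 1 - c ^ 2 := by
      rw [← Real.sq_sqrt (show 0 ≤ 1 - c ^ 2 by nlinarith)]
      gcongr
    rw [sq_abs, Real.sin_sq] at h1
    exact abs_le_of_sq_le_sq' (by linarith) hct |>.2
  obtain ⟨d, hd⟩ := mem_range_of_exists_le_of_exists_ge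
    (f := fun d => u ⬝ᵥ μ d) (continuous_const.dotProduct hcont)
    ⟨b, (le_max_left _ _).trans hcc⟩ ⟨a, by rw [← hua, hu]; exact Real.cos_le_one t⟩
  have hdd := hunit d
  have hdR := hμ d
  have h0R : Real.cos 0 • u + Real.sin 0 • ![-u 1, u 0] ∈ RS (GM μ) := by simpa using hμ a
  have hexp : μ d = Real.cos t • u + (![-u 1, u 0] ⬝ᵥ μ d) • ![-u 1, u 0] := by
    rw [← hd]
    simp only [dotProduct, Fin.sum_univ_two] at hu ⊢
    ext i
    fin_cases i <;> simp
    · linear_combination (-μ d 0) * hu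
    · linear_combination (-μ d 1) * hu
  set r := ![-u 1, u 0] ⬝ᵥ μ d with hr
  have hrt : r ^ 2 = Real.sin t ^ 2 := by
    rw [hexp, dot_combo hv] at hdd
    rw [Real.sin_sq]; linarith
  rw [hexp] at hdR
  rcases sq_eq_sq_iff_eq_or_eq_neg.1 hrt with h | h
  · rwa [h] at hdR
  · have := hR.angle hv (s := 0) (t := -t) h0R (by rwa [h, ← Real.cos_neg, ← Real.sin_neg] at hdR)
    simpa using this

end ReflGen

open ReflGen

/-- If `A` is connected with at least two points and `μ : A → S^{n−1}` is continuous with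
`span{μ(a)} = ℝⁿ`, then the subgroup of O(n) generated by the reflections `I − 2μ(a)⊗μ(a)`
is the whole orthogonal group. -/
theorem stmt_13 (n : ℕ) (hn : 2 ≤ n)
    (A : Type*) [TopologicalSpace A] [ConnectedSpace A] (htwo : ∃ a b : A, a ≠ b)
    (μ : A → (Fin n → ℝ)) (hcont : Continuous μ)
    (hunit : ∀ a, μ a ⬝ᵥ μ a = 1)
    (hspan : Submodule.span ℝ (Set.range μ) = ⊤) :
    Subgroup.closure
        {g : Matrix.orthogonalGroup (Fin n) ℝ |
          ∃ a, (g : Matrix (Fin n) (Fin n) ℝ) = reflMat (μ a)}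
      = ⊤ := by
  have hall : ∀ x : Fin n → ℝ, x ⬝ᵥ x = 1 → x ∈ RS (GM μ) := by
    rcases hn.eq_or_lt with rfl | h3
    · exact all_of_two hcont hunit hspan
    · exact all_of_three_le h3 hcont hunit hspan
  have htrans : ∀ M ∈ GM μ, ∃ g ∈ Subgroup.closure {g : Matrix.orthogonalGroup (Fin n) ℝ |
      ∃ a, (g : Matrix (Fin n) (Fin n) ℝ) = reflMat (μ a)}, (g : Matrix (Fin n) (Fin n) ℝ) = M := by
    intro M hM
    induction hM using Submonoid.closure_induction with
    | mem x hx =>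
      obtain ⟨a, rfl⟩ := hx
      refine ⟨⟨reflMat (μ a), ?_⟩, Subgroup.subset_closure ⟨a, rfl⟩, rfl⟩
      rw [Matrix.mem_orthogonalGroup_iff]
      exact GM_orth hunit (refl_mem_GM a)
    | one => exact ⟨1, Subgroup.one_mem _, rfl⟩
    | mul x y _ _ hx hy =>
      obtain ⟨g, hg, rfl⟩ := hx
      obtain ⟨g', hg', rfl⟩ := hy
      exact ⟨g * g', Subgroup.mul_mem _ hg hg', rfl⟩
  rw [eq_top_iff]
  intro g _
  obtain ⟨g', hg', he⟩ := htrans g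
    (mem_of_all_refl (fun u hu => (hall u hu).2) ((Matrix.mem_orthogonalGroup_iff' _ _).1 g.2))
  rwa [← Subtype.ext he]
end

section
/- Let n ≥ 1, let A be a nonempty path-connected topological space, let μ : A → S^{n−1} ⊂ ℝⁿ be continuous, and let G be the subgroup of O(n) generated by the reflections s_a := I − 2 μ(a)⊗μ(a), a ∈ A. Then the subgroup K := G ∩ SO(n), which consists precisely of all products of an even number of the reflections s_a, is a path-connected subset of SO(n). -/
/-!
Each `s_a` is an orthogonal involution of determinant `-1`. Hence inverses are not needed to
generate `G`: every element of `G` is a product of a list of the `s_a`, of determinant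
`(-1) ^ length`, and the elements of determinant `1` are exactly the products of even length.

For path-connectedness, let `γ` be a path in `A` from `a` to `b` and let `P` be an even product.
Then `t ↦ s_{γ t} s_b P` is a path of even products from `s_a s_b P` to `s_b s_b P = P`. Removing
two factors at a time in this way joins every even product to the identity
(`joinedIn_evenProducts`).
-/

open Matrix

theorem reflMat_transpose {n : ℕ} (u : Fin n → ℝ) : (reflMat u)ᵀ = reflMat u := by
  simp [reflMat, transpose_vecMulVec]

theorem reflMat_mul_self {n : ℕ} {u : Fin n → ℝ} (hu : u ⬝ᵥ u = 1) :
    reflMat u * reflMat u = 1 := by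
  have h : vecMulVec u u * vecMulVec u u = vecMulVec u u := by
    rw [vecMulVec_mul_vecMulVec, hu, one_smul]
  simp only [reflMat, sub_mul, mul_sub, one_mul, mul_one, smul_mul_assoc, mul_smul_comm, h]
  module

theorem det_reflMat {n : ℕ} {u : Fin n → ℝ} (hu : u ⬝ᵥ u = 1) : (reflMat u).det = -1 := by
  have h : reflMat u = 1 + replicateCol Unit ((-2 : ℝ) • u) * replicateRow Unit u := by
    rw [← vecMulVec_eq, smul_vecMulVec, reflMat]
    module
  rw [h, det_one_add_replicateCol_mul_replicateRow, dotProduct_smul, hu]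
  norm_num

/-- The reflection across `u^⊥`, for a unit vector `u`, as an element of `O(n)`. -/
noncomputable def reflO {n : ℕ} (u : Fin n → ℝ) (hu : u ⬝ᵥ u = 1) :
    Matrix.orthogonalGroup (Fin n) ℝ :=
  ⟨reflMat u, by
    rw [mem_orthogonalGroup_iff, reflMat_transpose, reflMat_mul_self hu]⟩

theorem reflO_mul_self {n : ℕ} {u : Fin n → ℝ} (hu : u ⬝ᵥ u = 1) :
    reflO u hu * reflO u hu = 1 :=
  Subtype.ext (reflMat_mul_self hu)

theorem continuous_reflO {n : ℕ} {A : Type*} [TopologicalSpace A] {μ : A → (Fin n → ℝ)}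
    (hcont : Continuous μ) (hunit : ∀ a, μ a ⬝ᵥ μ a = 1) :
    Continuous fun a => reflO (μ a) (hunit a) :=
  Continuous.subtype_mk
    (continuous_const.sub ((hcont.matrix_vecMulVec hcont).const_smul (2 : ℝ))) _

theorem coe_prod_reflO {n : ℕ} {A : Type*} {μ : A → (Fin n → ℝ)}
    (hunit : ∀ a, μ a ⬝ᵥ μ a = 1) (l : List A) :
    ((l.map fun a => reflO (μ a) (hunit a)).prod : Matrix (Fin n) (Fin n) ℝ) =
      (l.map fun a => reflMat (μ a)).prod := by
  induction l with
  | nil => rfl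
  | cons a l ih =>
    rw [List.map_cons, List.prod_cons, List.map_cons, List.prod_cons, ← ih]
    rfl

theorem det_prod_reflMat {n : ℕ} {A : Type*} {μ : A → (Fin n → ℝ)}
    (hunit : ∀ a, μ a ⬝ᵥ μ a = 1) (l : List A) :
    (l.map fun a => reflMat (μ a)).prod.det = (-1) ^ l.length := by
  induction l with
  | nil => simp
  | cons a l ih =>
    rw [List.map_cons, List.prod_cons, det_mul, ih, det_reflMat (hunit a), List.length_cons,
      pow_succ']

/-- In a group, the subgroup generated by a family of involutions consists of the products of
members of the family, without inverses. -/
theorem mem_closure_involutions {G A : Type*} [Group G] {s : A → G} (hs : ∀ a, s a * s a = 1)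
    (g : G) : g ∈ Subgroup.closure (Set.range s) ↔ ∃ l : List A, g = (l.map s).prod := by
  constructor
  · intro hg
    induction hg using Subgroup.closure_induction with
    | mem x hx =>
      obtain ⟨a, rfl⟩ := hx
      exact ⟨[a], by simp⟩
    | one => exact ⟨[], rfl⟩
    | mul x y _ _ hx hy =>
      obtain ⟨l, rfl⟩ := hx
      obtain ⟨m, rfl⟩ := hy
      exact ⟨l ++ m, by simp⟩
    | inv x _ hx =>
      obtain ⟨l, rfl⟩ := hx
      refine ⟨l.reverse, ?_⟩
      have h : (fun x => x⁻¹) ∘ s = s := funext fun a => inv_eq_of_mul_eq_one_left (hs a)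
      rw [List.prod_inv_reverse, List.map_map, h, List.map_reverse]
  · rintro ⟨l, rfl⟩
    refine Subgroup.list_prod_mem _ fun x hx => ?_
    obtain ⟨a, -, rfl⟩ := List.mem_map.1 hx
    exact Subgroup.subset_closure ⟨a, rfl⟩

/-- For a continuous family of involutions over a path-connected space, every even product can be
joined to `1` within the even products. -/
theorem joinedIn_evenProducts {G A : Type*} [Group G] [TopologicalSpace G] [ContinuousMul G]
    [TopologicalSpace A] [PathConnectedSpace A] {s : A → G} (hcont : Continuous s)
    (hs : ∀ a, s a * s a = 1) :
    ∀ l : List A, Even l.length →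
      JoinedIn {g | ∃ l : List A, Even l.length ∧ g = (l.map s).prod} (l.map s).prod 1
  | [], _ => JoinedIn.refl ⟨[], by simp, rfl⟩
  | [_], h => by simp at h
  | a :: b :: l, h => by
    have hl : Even l.length := by simpa [Nat.even_add_one] using h
    refine JoinedIn.trans ?_ (joinedIn_evenProducts hcont hs l hl)
    obtain ⟨γ⟩ := PathConnectedSpace.joined a b
    refine ⟨⟨⟨fun t => s (γ t) * (s b * (l.map s).prod), by fun_prop⟩, by simp, ?_⟩, fun t => ?_⟩
    · simp [← mul_assoc, hs]
    · exact ⟨γ t :: b :: l, by simpa [Nat.even_add_one] using hl, by simp⟩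

/-- Given a continuous family `μ : A → S^{n−1}` over a nonempty path-connected space `A`,
the subgroup `K := G ∩ SO(n)` of the group `G` generated by the reflections
`s_a = I − 2μ(a)⊗μ(a)` consists precisely of the products of an even number of the `s_a`,
and is a path-connected subset of SO(n). -/
theorem stmt_14 (n : ℕ) (hn : 1 ≤ n)
    (A : Type*) [TopologicalSpace A] [PathConnectedSpace A]
    (μ : A → (Fin n → ℝ)) (hcont : Continuous μ) (hunit : ∀ a, μ a ⬝ᵥ μ a = 1) :
    ({g : Matrix.orthogonalGroup (Fin n) ℝ |
        g ∈ Subgroup.closure {g : Matrix.orthogonalGroup (Fin n) ℝ |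
              ∃ a, (g : Matrix (Fin n) (Fin n) ℝ) = reflMat (μ a)} ∧
        (g : Matrix (Fin n) (Fin n) ℝ).det = 1}
      = {g : Matrix.orthogonalGroup (Fin n) ℝ |
          ∃ l : List A, Even l.length ∧
            (g : Matrix (Fin n) (Fin n) ℝ) = (l.map fun a => reflMat (μ a)).prod}) ∧
    IsPathConnected {g : Matrix.orthogonalGroup (Fin n) ℝ |
        g ∈ Subgroup.closure {g : Matrix.orthogonalGroup (Fin n) ℝ |
              ∃ a, (g : Matrix (Fin n) (Fin n) ℝ) = reflMat (μ a)} ∧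
        (g : Matrix (Fin n) (Fin n) ℝ).det = 1} := by
  have hgen : {g : Matrix.orthogonalGroup (Fin n) ℝ |
      ∃ a, (g : Matrix (Fin n) (Fin n) ℝ) = reflMat (μ a)} =
        Set.range fun a => reflO (μ a) (hunit a) := by
    ext g
    exact exists_congr fun a => ⟨fun h => Subtype.ext h.symm, fun h => by rw [← h]; rfl⟩
  have hs : ∀ a, reflO (μ a) (hunit a) * reflO (μ a) (hunit a) = 1 :=
    fun a => reflO_mul_self (hunit a)
  have hprod : ∀ (g : Matrix.orthogonalGroup (Fin n) ℝ) (l : List A),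
      (g : Matrix (Fin n) (Fin n) ℝ) = (l.map fun a => reflMat (μ a)).prod ↔
        g = (l.map fun a => reflO (μ a) (hunit a)).prod := fun g l => by
    rw [← coe_prod_reflO hunit l, Subtype.coe_inj]
  rw [hgen]
  refine (and_iff_left_of_imp ?_).2 ?_
  · intro key
    rw [key]
    simp only [hprod]
    refine ⟨1, ⟨[], by simp, rfl⟩, ?_⟩
    rintro g ⟨l, hl, rfl⟩
    exact (joinedIn_evenProducts (continuous_reflO hcont hunit) hs l hl).symm
  · ext g
    simp only [Set.mem_ofPred_eq, mem_closure_involutions hs, ← hprod]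
    constructor
    · rintro ⟨⟨l, hl⟩, hdet⟩
      refine ⟨l, ?_, hl⟩
      rw [hl, det_prod_reflMat hunit] at hdet
      exact (neg_one_pow_eq_one_iff_even (by norm_num)).1 hdet
    · rintro ⟨l, heven, hl⟩
      exact ⟨⟨l, hl⟩, by rw [hl, det_prod_reflMat hunit, heven.neg_one_pow]⟩
end

section
/- Let m, J > 0 and let φ : ℝ² × ℝ × S¹ → ℝ be measurable. Define φ₀(v, ω, θ) := φ(v, ω, θ) − φ(0, 0, θ). Suppose that for all θ, θ̄ ∈ S¹ the map Φ(v, v̄, ω, ω̄) := φ₀(v, ω, θ) + φ₀(v̄, ω̄, θ̄) is constant on each energy–momentum set: whenever (v, v̄, ω, ω̄) and (v′, v̄′, ω′, ω̄′) in ℝ²×ℝ²×ℝ×ℝ satisfy m v + m v̄ = m v′ + m v̄′ and m|v|² + Jω² + m|v̄|² + Jω̄² = m|v′|² + Jω′² + m|v̄′|² + Jω̄′², one has Φ(v, v̄, ω, ω̄) = Φ(v′, v̄′, ω′, ω̄′). Then there exist b ∈ ℝ², c ∈ ℝ, and a measurable function a : S¹ → ℝ such that φ(v, ω, θ) = a(θ)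 + b·v + c(m|v|² + Jω²) for all (v, ω, θ) ∈ ℝ² × ℝ × S¹. -/
open Matrix

/-!
Swapping the two particles shows that `φ₀` does not depend on the orientation; write
`f v ω` for it. On the purely rotational states, `s ↦ f 0 √s` is additive on `[0, ∞)`, hence
extends to a measurable additive map `ℝ → ℝ`, which is linear: `f 0 ω = c J ω²`
(`rotational_part`). Subtracting `c` times the energy leaves a function `L v` of the linear
velocity alone. The energy constraint on `L` is now void, because the angular speeds can be chosen
to compensate any energy defect of the linear velocities; so `L` is additive and measurable,
hence linear.
-/

/-- A measurable additive map on a finite-dimensional space `Fin n → ℝ` is a dot product. -/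
lemma exists_dotProduct_of_measurable_additive {n : ℕ} (L : (Fin n → ℝ) → ℝ)
    (hL : Measurable L) (hadd : ∀ v w, L (v + w) = L v + L w) :
    ∃ b : Fin n → ℝ, ∀ v, L v = b ⬝ᵥ v := by
  let A : (Fin n → ℝ) →+ ℝ := AddMonoidHom.mk' L hadd
  have hA : Continuous A := MeasureTheory.Measure.AddMonoidHom.continuous_of_measurable A hL
  let B : (Fin n → ℝ) →L[ℝ] ℝ := A.toRealLinearMap hA
  refine ⟨fun i => B (Pi.single i 1), fun v => ?_⟩
  have h1 : B v = ∑ i, v i * B (Pi.single i 1) := by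
    conv_lhs => rw [pi_eq_sum_univ' v]
    simp [map_sum]
  calc L v = B v := rfl
    _ = _ := by rw [h1, dotProduct]; exact Finset.sum_congr rfl fun i _ => mul_comm _ _

/-- A measurable function of the angular speed which only depends on, and is additive in, the
square of its argument is a multiple of that square. -/
lemma rotational_part (r : ℝ → ℝ) (hr : Measurable r)
    (h : ∀ x y z : ℝ, x ^ 2 + y ^ 2 = z ^ 2 → r x + r y = r z) :
    ∃ c : ℝ, ∀ x, r x = c * x ^ 2 := by
  have h0 : r 0 = 0 := by linarith [h 0 0 0 (by norm_num)]
  -- The odd extension of `s ↦ r √s`: junk values `√s = 0` for `s < 0` make it a single formula.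
  let G : ℝ → ℝ := fun s => r √s - r √(-s)
  have hG : Measurable G := by
    have h1 : Measurable fun s : ℝ => √s := Real.continuous_sqrt.measurable
    exact (hr.comp h1).sub (hr.comp (h1.comp measurable_neg))
  have hpos : ∀ s t : ℝ, 0 ≤ s → 0 ≤ t → r √(s + t) = r √s + r √t := fun s t hs ht =>
    (h _ _ _ (by rw [Real.sq_sqrt hs, Real.sq_sqrt ht, Real.sq_sqrt (add_nonneg hs ht)])).symm
  have hmax : ∀ s : ℝ, √s = √(max s 0) := fun s => by
    rcases le_total s 0 with hs | hs
    · rw [max_eq_right hs, Real.sqrt_eq_zero_of_nonpos hs, Real.sqrt_zero]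
    · rw [max_eq_left hs]
  have hadd : ∀ s t, G (s + t) = G s + G t := fun s t => by
    simp only [G]
    rw [hmax s, hmax t, hmax (-s), hmax (-t), hmax (s + t), hmax (-(s + t))]
    have hdec : ∀ u : ℝ, max u 0 - max (-u) 0 = u := fun u => by
      rcases le_total u 0 with hu | hu
      · rw [max_eq_right hu, max_eq_left (by linarith)]; ring
      · rw [max_eq_left hu, max_eq_right (by linarith)]; ring
    have e : max s 0 + max t 0 + max (-(s + t)) 0
        = max (-s) 0 + max (-t) 0 + max (s + t) 0 := by
      linarith [hdec s, hdec t, hdec (s + t)]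
    have p : ∀ u : ℝ, 0 ≤ max u 0 := fun u => le_max_right _ _
    have e' := congrArg r (congrArg Real.sqrt e)
    rw [hpos _ _ (add_nonneg (p _) (p _)) (p _), hpos _ _ (p _) (p _),
      hpos _ _ (add_nonneg (p _) (p _)) (p _), hpos _ _ (p _) (p _)] at e'
    linarith
  let A : ℝ →+ ℝ := AddMonoidHom.mk' G hadd
  have hA : Continuous A := MeasureTheory.Measure.AddMonoidHom.continuous_of_measurable A hG
  refine ⟨G 1, fun x => ?_⟩
  have h1 : G (x ^ 2) = x ^ 2 * G 1 := by
    have := map_real_smul A hA (x ^ 2) 1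
    simpa [A] using this
  have h2 : G (x ^ 2) = r x := by
    simp only [G]
    rw [Real.sqrt_eq_zero_of_nonpos (by nlinarith [sq_nonneg x] : -x ^ 2 ≤ 0), h0, sub_zero]
    have := h x 0 √(x ^ 2) (by rw [Real.sq_sqrt (sq_nonneg x)]; ring)
    linarith
  rw [← h2, h1, mul_comm]

/-- A measurable `φ : ℝ² × ℝ × S¹ → ℝ` such that, for every pair of orientations, the
symmetrised function `φ₀ ⊕ φ₀` (with `φ₀(v,ω,θ) := φ(v,ω,θ) − φ(0,0,θ)`) is constant on each
set of velocities with fixed total linear momentum and fixed total kinetic energy, is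
necessarily of the form `φ(v,ω,θ) = a(θ) + b·v + c(m|v|² + Jω²)` with `a` measurable. -/
theorem stmt_19 (m J : ℝ) (hm : 0 < m) (hJ : 0 < J)
    (φ : (Fin 2 → ℝ) × ℝ × {x : Fin 2 → ℝ // x ⬝ᵥ x = 1} → ℝ)
    (hφ : Measurable φ)
    (h : ∀ (θ θb : {x : Fin 2 → ℝ // x ⬝ᵥ x = 1})
        (v vb v' vb' : Fin 2 → ℝ) (ω ωb ω' ωb' : ℝ),
      m • v + m • vb = m • v' + m • vb' →
      m * (v ⬝ᵥ v) + J * ω ^ 2 + m * (vb ⬝ᵥ vb) + J * ωb ^ 2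
        = m * (v' ⬝ᵥ v') + J * ω' ^ 2 + m * (vb' ⬝ᵥ vb') + J * ωb' ^ 2 →
      (φ (v, ω, θ) - φ (0, 0, θ)) + (φ (vb, ωb, θb) - φ (0, 0, θb))
        = (φ (v', ω', θ) - φ (0, 0, θ)) + (φ (vb', ωb', θb) - φ (0, 0, θb))) :
    ∃ (b : Fin 2 → ℝ) (c : ℝ) (a : {x : Fin 2 → ℝ // x ⬝ᵥ x = 1} → ℝ),
      Measurable a ∧
      ∀ (v : Fin 2 → ℝ) (ω : ℝ) (θ : {x : Fin 2 → ℝ // x ⬝ᵥ x = 1}),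
        φ (v, ω, θ) = a θ + b ⬝ᵥ v + c * (m * (v ⬝ᵥ v) + J * ω ^ 2) := by
  let θ₀ : {x : Fin 2 → ℝ // x ⬝ᵥ x = 1} := ⟨![1, 0], by simp⟩
  let f : (Fin 2 → ℝ) → ℝ → ℝ := fun v ω => φ (v, ω, θ₀) - φ (0, 0, θ₀)
  have f0 : f 0 0 = 0 := sub_self _
  have hf : ∀ v ω θ, φ (v, ω, θ) = φ (0, 0, θ) + f v ω := fun v ω θ => by
    have := h θ θ₀ v 0 0 v ω 0 0 ω (by abel) (by simp)
    simp only [f]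
    linarith
  have H : ∀ (v w v' w' : Fin 2 → ℝ) (x y x' y' : ℝ), v + w = v' + w' →
      m * (v ⬝ᵥ v) + J * x ^ 2 + m * (w ⬝ᵥ w) + J * y ^ 2
        = m * (v' ⬝ᵥ v') + J * x' ^ 2 + m * (w' ⬝ᵥ w') + J * y' ^ 2 →
      f v x + f w y = f v' x' + f w' y' := fun v w v' w' x y x' y' h1 h2 =>
    h θ₀ θ₀ v w v' w' x y x' y' (by rw [← smul_add, ← smul_add, h1]) h2
  obtain ⟨c₀, hc₀⟩ := rotational_part (f 0)
    ((hφ.comp (by fun_prop : Measurable fun ω : ℝ => ((0 : Fin 2 → ℝ), ω, θ₀))).sub_const _)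
    (fun x y z hz => by
      have := H 0 0 0 0 x y z 0 rfl (by simp; rw [← mul_add, hz])
      linarith)
  obtain ⟨c, rfl⟩ : ∃ c, c₀ = c * J := ⟨c₀ / J, by field_simp⟩
  have hsplit : ∀ v ω, f v ω = f v 0 + c * J * ω ^ 2 := fun v ω => by
    have := H v 0 v 0 ω 0 0 ω rfl (by simp)
    rw [f0, hc₀] at this
    linarith
  let L : (Fin 2 → ℝ) → ℝ := fun v => f v 0 - c * (m * (v ⬝ᵥ v))
  have hL : Measurable L := by
    have h1 : Measurable fun v : Fin 2 → ℝ => f v 0 :=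
      (hφ.comp (by fun_prop : Measurable fun v : Fin 2 → ℝ => (v, (0 : ℝ), θ₀))).sub_const _
    have h2 : Measurable fun v : Fin 2 → ℝ => v ⬝ᵥ v := by
      unfold dotProduct
      fun_prop
    exact h1.sub ((h2.const_mul m).const_mul c)
  have hadd : ∀ v w, L (v + w) = L v + L w := fun v w => by
    -- `p - q` is the energy defect `2 m v·w`; it is absorbed by the angular speeds.
    obtain ⟨p, q, hp, hq, hpq⟩ : ∃ p q : ℝ, 0 ≤ p ∧ 0 ≤ q ∧
        p - q = m * ((v + w) ⬝ᵥ (v + w)) - m * (v ⬝ᵥ v) - m * (w ⬝ᵥ w) := by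
      generalize m * ((v + w) ⬝ᵥ (v + w)) - m * (v ⬝ᵥ v) - m * (w ⬝ᵥ w) = d
      rcases le_total 0 d with hd | hd
      · exact ⟨d, 0, hd, le_rfl, by ring⟩
      · exact ⟨0, -d, le_rfl, by linarith, by ring⟩
    have hp' : J * √(p / J) ^ 2 = p := by
      rw [Real.sq_sqrt (by positivity)]; field_simp
    have hq' : J * √(q / J) ^ 2 = q := by
      rw [Real.sq_sqrt (by positivity)]; field_simp
    have e := H v w (v + w) 0 √(p / J) 0 √(q / J) 0 (by simp)
      (by rw [hp', hq']; simp only [dotProduct_zero]; linarith)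
    rw [hsplit v, hsplit (v + w), f0, mul_assoc, mul_assoc, hp', hq'] at e
    have hpq' := congrArg (c * ·) hpq
    simp only [L]
    linarith
  obtain ⟨b, hb⟩ := exists_dotProduct_of_measurable_additive L hL hadd
  refine ⟨b, c, fun θ => φ (0, 0, θ), hφ.comp (by fun_prop), fun v ω θ => ?_⟩
  rw [hf, hsplit, ← hb]
  simp only [L]
  ring
end
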